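/- Let d ≥ 3 be a fixed integer and set α = min{1/4, (d−2)/(2d)}. For every ε > 0 there exist constants c > 0 and N such that for all n ≥ N and all primes p with gcd(p,d) = 1 and p ≤ c·n^α, one has | (1/(nd)!) · Σ_{v ∈ F_p^n, v ≠ 0} #{permutations P of [n]×[d] : A(P)·v = 0 over F_p} − 1 | ≤ ε, where A(P) is reduced modulo p. -/

import Mathlib

open Finset

/-- Adjacency matrix of the directed configuration model: `A(P) k ℓ` is the number
of `i ∈ [d]` with `P (k, i) ∈ {ℓ} × [d]`. -/
def adjMat (n d : ℕ) (P : Equiv.Perm (Fin n × Fin d)) : Matrix (Fin n) (Fin n) ℤ :=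
  fun k l => ((Finset.univ.filter (fun i : Fin d => (P (k, i)).1 = l)).card : ℤ)

set_option linter.unusedSectionVars false

section GF

variable {X α : Type*} [Fintype X] [DecidableEq X] [Fintype α] [DecidableEq α]

/-- number of occurrences of a letter -/
def occ (u : X → α) (a : α) : ℕ := (univ.filter (fun x => u x = a)).card

lemma exists_perm_of_occ (u w : X → α) (h : ∀ a, occ w a = occ u a) :
    ∃ P : Equiv.Perm X, u ∘ P = w := by
  have e : ∀ a, Nonempty ({x // w x = a} ≃ {x // u x = a}) := by
    intro a
    refine ⟨Fintype.equivOfCardEq ?_⟩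
    have := h a
    simpa [occ, Fintype.card_subtype] using this
  refine ⟨Equiv.ofFiberEquiv (fun a => (e a).some), ?_⟩
  funext x
  exact Equiv.ofFiberEquiv_map (fun a => (e a).some) x

lemma occ_comp_perm (u : X → α) (P : Equiv.Perm X) (a : α) : occ (u ∘ P) a = occ u a := by
  unfold occ
  refine Finset.card_bij (fun x _ => P x) ?_ ?_ ?_
  · intro x hx; simpa using hx
  · intro x _ y _ h; exact P.injective h
  · intro y hy
    exact ⟨P.symm y, by simpa using hy, by simp⟩

lemma card_perm_fiber (u w : X → α) :
    (univ.filter (fun P : Equiv.Perm X => u ∘ P = w)).card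
      = if (∀ a, occ w a = occ u a) then ∏ a, (occ u a).factorial else 0 := by
  split_ifs with h
  · obtain ⟨P0, hP0⟩ := exists_perm_of_occ u w h
    have h1 : (univ.filter (fun P : Equiv.Perm X => u ∘ P = w)).card
        = (univ.filter (fun P : Equiv.Perm X => u ∘ P = u)).card := by
      refine Finset.card_bij' (fun P _ => P * P0⁻¹) (fun P _ => P * P0) ?_ ?_ ?_ ?_
      · intro P hP
        simp only [mem_filter, mem_univ, true_and] at hP ⊢
        rw [Equiv.Perm.coe_mul, ← Function.comp_assoc, hP, ← hP0]
        funext x; simp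
      · intro P hP
        simp only [mem_filter, mem_univ, true_and] at hP ⊢
        rw [Equiv.Perm.coe_mul, ← Function.comp_assoc, hP, ← hP0]
      · intro P _; simp
      · intro P _; simp
    rw [h1, ← Fintype.card_subtype, DomMulAct.stabilizer_card]
    refine Finset.prod_congr rfl fun a _ => ?_
    rw [occ, Fintype.card_subtype]
  · rw [Finset.card_eq_zero, Finset.filter_eq_empty_iff]
    intro P _ hP
    exact h fun a => by rw [← hP, occ_comp_perm]

lemma prod_letters {M : Type*} [CommMonoid M] (w : X → α) (g : α → M) :
    ∏ x, g (w x) = ∏ a, g a ^ occ w a := by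
  rw [← Finset.prod_fiberwise univ w]
  refine Finset.prod_congr rfl fun a _ => ?_
  rw [occ, ← Finset.prod_const]
  refine Finset.prod_congr rfl fun x hx => ?_
  simp at hx; rw [hx]

lemma occ_le (u : X → α) (a : α) : occ u a ≤ Fintype.card X := by
  unfold occ; exact Finset.card_le_univ _

lemma content_indicator (M : ℕ) [NeZero M] (hM : Fintype.card X < M) (u w : X → α) :
    ∑ t : α → ZMod M, (∏ x, (ZMod.stdAddChar (t (w x)) : ℂ)) * ∏ x, (ZMod.stdAddChar (-t (u x)) : ℂ)
      = if (∀ a, occ w a = occ u a) then (M : ℂ) ^ Fintype.card α else 0 := by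
  have h1 : ∀ t : α → ZMod M, (∏ x, (ZMod.stdAddChar (t (w x)) : ℂ)) * ∏ x, (ZMod.stdAddChar (-t (u x)) : ℂ)
      = ∏ a, (ZMod.stdAddChar (t a * ((occ w a : ZMod M) - (occ u a : ZMod M))) : ℂ) := by
    intro t
    rw [prod_letters w (fun a => (ZMod.stdAddChar (t a) : ℂ)),
      prod_letters u (fun a => (ZMod.stdAddChar (-t a) : ℂ)), ← Finset.prod_mul_distrib]
    refine Finset.prod_congr rfl fun a _ => ?_
    rw [← AddChar.map_nsmul_eq_pow, ← AddChar.map_nsmul_eq_pow, ← AddChar.map_add_eq_mul]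
    congr 1
    simp only [nsmul_eq_mul]; ring
  simp_rw [h1]
  rw [← Fintype.prod_sum (fun a (s : ZMod M) =>
    (ZMod.stdAddChar (s * ((occ w a : ZMod M) - (occ u a : ZMod M))) : ℂ))]
  simp_rw [AddChar.sum_mulShift _ (ZMod.isPrimitive_stdAddChar M)]
  have h2 : ∀ a, ((occ w a : ZMod M) - (occ u a : ZMod M) = 0) ↔ occ w a = occ u a := by
    intro a
    rw [sub_eq_zero, ZMod.natCast_eq_natCast_iff]
    constructor
    · intro h
      exact Nat.ModEq.eq_of_lt_of_lt h ((occ_le w a).trans_lt hM) ((occ_le u a).trans_lt hM)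
    · intro h; rw [h]
  simp_rw [h2]
  split_ifs with h
  · simp [h]
  · push Not at h
    obtain ⟨a, ha⟩ := h
    exact Finset.prod_eq_zero (mem_univ a) (by simp [ha])

/-- generating function bound for sums over permutations -/
lemma perm_sum_bound (u : X → α) (f : X → α → ℂ) (r : α → ℝ)
    (hu : ∀ x, 0 < r (u x)) (K : ℝ)
    (hK : ∀ z : α → ℂ, (∀ a, ‖z a‖ = 1) → ∏ x, ‖∑ a, (r a : ℂ) * z a * f x a‖ ≤ K) :
    ‖∑ P : Equiv.Perm X, ∏ x, f x (u (P x))‖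
      ≤ (∏ a, ((occ u a).factorial : ℝ)) * (∏ x, r (u x))⁻¹ * K := by
  set M := Fintype.card X + 1 with hMdef
  have : NeZero M := ⟨by omega⟩
  have hM : Fintype.card X < M := by omega
  set R : ℝ := ∏ x, r (u x) with hR
  have hRpos : 0 < R := Finset.prod_pos fun x _ => hu x
  set c : ℝ := ∏ a, ((occ u a).factorial : ℝ) with hc
  have hc0 : 0 ≤ c := Finset.prod_nonneg fun _ _ => by positivity
  -- step 1
  have h1 : ∑ P : Equiv.Perm X, ∏ x, f x (u (P x))
      = ∑ w : X → α, (if (∀ a, occ w a = occ u a) then (c : ℂ) else 0) * ∏ x, f x (w x) := by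
    rw [← Finset.sum_fiberwise univ (fun P : Equiv.Perm X => u ∘ P)]
    refine Finset.sum_congr rfl fun w _ => ?_
    have : ∀ P ∈ univ.filter (fun P : Equiv.Perm X => u ∘ P = w), ∏ x, f x (u (P x)) = ∏ x, f x (w x) := by
      intro P hP
      simp only [mem_filter, mem_univ, true_and] at hP
      rw [← hP]; rfl
    rw [Finset.sum_congr rfl this, Finset.sum_const, card_perm_fiber, nsmul_eq_mul]
    congr 1
    split_ifs <;> simp [hc]
  have h2 : ∀ w : X → α, (if (∀ a, occ w a = occ u a) then (c : ℂ) else 0) * ∏ x, f x (w x)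
      = (c : ℂ) * (R : ℂ)⁻¹ * ((M : ℂ) ^ Fintype.card α)⁻¹ *
        ∑ t : α → ZMod M, (∏ x, (ZMod.stdAddChar (-t (u x)) : ℂ)) *
          ∏ x, ((r (w x) : ℂ) * ZMod.stdAddChar (t (w x)) * f x (w x)) := by
    intro w
    have e1 : ∑ t : α → ZMod M, (∏ x, (ZMod.stdAddChar (-t (u x)) : ℂ)) *
          ∏ x, ((r (w x) : ℂ) * ZMod.stdAddChar (t (w x)) * f x (w x))
        = (∑ t : α → ZMod M, (∏ x, (ZMod.stdAddChar (t (w x)) : ℂ)) *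
            ∏ x, (ZMod.stdAddChar (-t (u x)) : ℂ)) * ((∏ x, (r (w x) : ℂ)) * ∏ x, f x (w x)) := by
      rw [Finset.sum_mul]
      refine Finset.sum_congr rfl fun t _ => ?_
      simp_rw [Finset.prod_mul_distrib]
      ring
    rw [e1, content_indicator M hM]
    split_ifs with h
    · have e2 : (∏ x, (r (w x) : ℂ)) = (R : ℂ) := by
        rw [hR]; push_cast
        rw [prod_letters w (fun a => (r a : ℂ)), prod_letters u (fun a => (r a : ℂ))]
        simp_rw [h]
      rw [e2]
      have : (R : ℂ) ≠ 0 := by exact_mod_cast hRpos.ne'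
      have : (M : ℂ) ≠ 0 := by exact_mod_cast (NeZero.ne M)
      field_simp
    · simp
  have h3 : ∑ P : Equiv.Perm X, ∏ x, f x (u (P x))
      = (c : ℂ) * (R : ℂ)⁻¹ * ((M : ℂ) ^ Fintype.card α)⁻¹ *
        ∑ t : α → ZMod M, (∏ x, (ZMod.stdAddChar (-t (u x)) : ℂ)) *
          ∏ x, ∑ a, ((r a : ℂ) * ZMod.stdAddChar (t a) * f x a) := by
    rw [h1]; simp_rw [h2]
    rw [← Finset.mul_sum, Finset.sum_comm]
    congr 1
    refine Finset.sum_congr rfl fun t _ => ?_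
    rw [← Finset.mul_sum, Fintype.prod_sum]
  have h4 : ‖∑ t : α → ZMod M, (∏ x, (ZMod.stdAddChar (-t (u x)) : ℂ)) *
          ∏ x, ∑ a, ((r a : ℂ) * ZMod.stdAddChar (t a) * f x a)‖ ≤ (M : ℝ) ^ Fintype.card α * K := by
    refine (norm_sum_le _ _).trans ?_
    have : ∀ t ∈ (univ : Finset (α → ZMod M)), ‖(∏ x, (ZMod.stdAddChar (-t (u x)) : ℂ)) *
          ∏ x, ∑ a, ((r a : ℂ) * ZMod.stdAddChar (t a) * f x a)‖ ≤ K := by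
      intro t _
      rw [norm_mul, norm_prod, norm_prod]
      simp only [AddChar.norm_apply, Finset.prod_const_one, one_mul]
      exact hK (fun a => ZMod.stdAddChar (t a)) (fun a => AddChar.norm_apply _ _)
    refine (Finset.sum_le_card_nsmul _ _ _ this).trans ?_
    rw [nsmul_eq_mul]
    simp [ZMod.card]
  rw [h3, norm_mul, norm_mul, norm_mul, norm_inv, norm_inv, norm_pow, Complex.norm_real,
    Complex.norm_real, Complex.norm_natCast, Real.norm_of_nonneg hc0, Real.norm_of_nonneg hRpos.le]
  have hMp : (0 : ℝ) < (M : ℝ) ^ Fintype.card α := by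
    have : 0 < (M : ℝ) := by exact_mod_cast Nat.pos_of_ne_zero (NeZero.ne M)
    positivity
  calc c * R⁻¹ * ((M : ℝ) ^ Fintype.card α)⁻¹ * _ ≤ c * R⁻¹ * ((M : ℝ) ^ Fintype.card α)⁻¹ * ((M : ℝ) ^ Fintype.card α * K) := by
        gcongr
    _ = c * R⁻¹ * K := by field_simp

end GF

section FF

variable {n d p : ℕ} [Fact p.Prime]

lemma addChar_sum {A ι : Type*} [AddCommMonoid A] (ψ : AddChar A ℂ) (s : Finset ι) (f : ι → A) :
    ψ (∑ i ∈ s, f i) = ∏ i ∈ s, ψ (f i) := by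
  classical
  induction s using Finset.induction_on with
  | empty => simp
  | insert a s ha ih => rw [Finset.sum_insert ha, Finset.prod_insert ha, AddChar.map_add_eq_mul, ih]

lemma mulVec_adj (P : Equiv.Perm (Fin n × Fin d)) (v : Fin n → ZMod p) (k : Fin n) :
    Matrix.mulVec ((adjMat n d P).map (Int.cast : ℤ → ZMod p)) v k = ∑ i, v (P (k, i)).1 := by
  simp only [Matrix.mulVec, dotProduct, Matrix.map_apply, adjMat, Int.cast_natCast]
  rw [← Finset.sum_fiberwise univ (fun i => (P (k, i)).1)]
  refine Finset.sum_congr rfl fun l _ => ?_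
  rw [← nsmul_eq_mul, ← Finset.sum_const]
  refine Finset.sum_congr rfl fun i hi => ?_
  simp only [mem_filter, mem_univ, true_and] at hi
  rw [hi]

lemma mulVec_adj_eq_zero (P : Equiv.Perm (Fin n × Fin d)) (v : Fin n → ZMod p) :
    Matrix.mulVec ((adjMat n d P).map (Int.cast : ℤ → ZMod p)) v = 0 ↔
      ∀ k, ∑ i, v (P (k, i)).1 = 0 := by
  rw [funext_iff]
  simp [mulVec_adj]

/-- probability that `v` is a null vector -/
noncomputable def nullProb (d : ℕ) (v : Fin n → ZMod p) : ℝ :=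
  ((univ.filter (fun P : Equiv.Perm (Fin n × Fin d) =>
    Matrix.mulVec ((adjMat n d P).map (Int.cast : ℤ → ZMod p)) v = 0)).card : ℝ) / (n * d).factorial

/-- expectation of the character of the bilinear form -/
noncomputable def chE (d : ℕ) (v w : Fin n → ZMod p) : ℂ :=
  ((n * d).factorial : ℂ)⁻¹ * ∑ P : Equiv.Perm (Fin n × Fin d),
    ∏ x, (ZMod.stdAddChar (v (P x).1 * w x.1) : ℂ)

lemma card_perm_X : Fintype.card (Equiv.Perm (Fin n × Fin d)) = (n * d).factorial := by
  rw [Fintype.card_perm]; simp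

lemma sum_chE_right (v : Fin n → ZMod p) :
    ∑ w, chE d v w = (p : ℂ) ^ n * (nullProb d v : ℂ) := by
  have key : ∀ P : Equiv.Perm (Fin n × Fin d),
      ∑ w : Fin n → ZMod p, ∏ x, (ZMod.stdAddChar (v (P x).1 * w x.1) : ℂ)
      = if Matrix.mulVec ((adjMat n d P).map (Int.cast : ℤ → ZMod p)) v = 0 then (p : ℂ) ^ n else 0 := by
    intro P
    have h1 : ∀ w : Fin n → ZMod p, ∏ x, (ZMod.stdAddChar (v (P x).1 * w x.1) : ℂ)
        = ∏ k, (ZMod.stdAddChar (w k * ∑ i, v (P (k, i)).1) : ℂ) := by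
      intro w
      rw [Fintype.prod_prod_type]
      refine Finset.prod_congr rfl fun k _ => ?_
      rw [Finset.mul_sum, addChar_sum]
      exact Finset.prod_congr rfl fun i _ => by rw [mul_comm]
    simp_rw [h1]
    rw [← Fintype.prod_sum (fun k (s : ZMod p) =>
      (ZMod.stdAddChar (s * ∑ i, v (P (k, i)).1) : ℂ))]
    simp_rw [AddChar.sum_mulShift _ (ZMod.isPrimitive_stdAddChar p)]
    simp only [mulVec_adj_eq_zero]
    split_ifs with h
    · simp [h]
    · push Not at h
      obtain ⟨a, ha⟩ := h
      exact Finset.prod_eq_zero (mem_univ a) (by simp [ha])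
  unfold chE nullProb
  rw [← Finset.mul_sum, Finset.sum_comm]
  simp_rw [key]
  rw [← Finset.sum_filter, Finset.sum_const, nsmul_eq_mul]
  push_cast
  ring

lemma chE_symm (v w : Fin n → ZMod p) : chE d v w = chE d w v := by
  unfold chE
  congr 1
  rw [← Equiv.sum_comp (Equiv.inv (Equiv.Perm (Fin n × Fin d)))]
  refine Finset.sum_congr rfl fun P _ => ?_
  rw [← Equiv.prod_comp P]
  refine Finset.prod_congr rfl fun x _ => ?_
  simp [mul_comm]

lemma norm_chE_le_one (v w : Fin n → ZMod p) : ‖chE d v w‖ ≤ 1 := by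
  unfold chE
  rw [norm_mul, norm_inv, Complex.norm_natCast]
  have h : ‖∑ P : Equiv.Perm (Fin n × Fin d), ∏ x, (ZMod.stdAddChar (v (P x).1 * w x.1) : ℂ)‖
      ≤ ((n * d).factorial : ℝ) := by
    refine (norm_sum_le _ _).trans ?_
    simp only [norm_prod, AddChar.norm_apply, Finset.prod_const_one]
    simp [Fintype.card_perm]
  have h0 : (0 : ℝ) < ((n * d).factorial : ℝ) := by positivity
  rw [inv_mul_le_iff₀ h0]
  simpa using h

lemma nullProb_nonneg (v : Fin n → ZMod p) : 0 ≤ nullProb d v := by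
  unfold nullProb; positivity

lemma nullProb_zero : nullProb d (0 : Fin n → ZMod p) = 1 := by
  unfold nullProb
  simp only [Matrix.mulVec_zero, Finset.filter_true, Finset.card_univ, card_perm_X]
  exact div_self (by positivity)

/-- main decomposition -/
lemma main_decomp (B : Finset (Fin n → ZMod p)) (hB : 0 ∈ B) :
    |(∑ v ∈ univ.filter (fun v : Fin n → ZMod p => v ≠ 0), nullProb d v) - 1|
      ≤ 2 * (∑ v ∈ B.erase 0, nullProb d v) + ((p : ℝ) ^ n)⁻¹ * (B.card : ℝ) ^ 2
        + ((p : ℝ) ^ n)⁻¹ * ∑ v ∈ Bᶜ, ∑ w ∈ Bᶜ, ‖chE d v w‖ := by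
  have hp : (p : ℂ) ^ n ≠ 0 := pow_ne_zero _ (by exact_mod_cast (Fact.out : p.Prime).ne_zero)
  have hpr : (0 : ℝ) < (p : ℝ) ^ n := pow_pos (by exact_mod_cast (Fact.out : p.Prime).pos) _
  have h1 : ∀ v : Fin n → ZMod p, (nullProb d v : ℂ) = ((p : ℂ) ^ n)⁻¹ * ∑ w, chE d v w := by
    intro v; rw [sum_chE_right]; field_simp
  have h2 : ∀ w : Fin n → ZMod p, (nullProb d w : ℂ) = ((p : ℂ) ^ n)⁻¹ * ∑ v, chE d v w := by
    intro v; rw [h1]; simp_rw [chE_symm v]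
  have hsplit : ∀ f : (Fin n → ZMod p) → ℂ, ∑ v, f v = ∑ v ∈ B, f v + ∑ v ∈ Bᶜ, f v :=
    fun f => (Finset.sum_add_sum_compl B f).symm
  have h3 : ((∑ v : Fin n → ZMod p, nullProb d v : ℝ) : ℂ) = 2 * ((∑ v ∈ B, nullProb d v : ℝ) : ℂ)
      - ((p : ℂ) ^ n)⁻¹ * (∑ v ∈ B, ∑ w ∈ B, chE d v w)
      + ((p : ℂ) ^ n)⁻¹ * ∑ v ∈ Bᶜ, ∑ w ∈ Bᶜ, chE d v w := by
    push_cast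
    have e1 : ∑ v ∈ Bᶜ, (nullProb d v : ℂ) = ((p : ℂ) ^ n)⁻¹ * (∑ v ∈ Bᶜ, ∑ w ∈ B, chE d v w)
        + ((p : ℂ) ^ n)⁻¹ * ∑ v ∈ Bᶜ, ∑ w ∈ Bᶜ, chE d v w := by
      rw [← mul_add, ← Finset.sum_add_distrib]
      rw [Finset.mul_sum]
      refine Finset.sum_congr rfl fun v _ => ?_
      rw [h1, hsplit]
    have e2 : ∑ w ∈ B, (nullProb d w : ℂ) = ((p : ℂ) ^ n)⁻¹ * (∑ v ∈ B, ∑ w ∈ B, chE d v w)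
        + ((p : ℂ) ^ n)⁻¹ * ∑ v ∈ Bᶜ, ∑ w ∈ B, chE d v w := by
      rw [← mul_add, Finset.sum_comm, Finset.sum_comm (s := Bᶜ), ← Finset.sum_add_distrib, Finset.mul_sum]
      refine Finset.sum_congr rfl fun v _ => ?_
      rw [h2, hsplit]
    rw [hsplit, e1]
    linear_combination (-1 : ℂ) * e2
  have h4 : (∑ v ∈ univ.filter (fun v : Fin n → ZMod p => v ≠ 0), nullProb d v) + 1
      = ∑ v : Fin n → ZMod p, nullProb d v := by
    rw [Finset.filter_ne' univ 0, ← nullProb_zero (n := n) (d := d) (p := p),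
      Finset.sum_erase_add _ _ (mem_univ _)]
  have h5 : (∑ v ∈ B.erase 0, nullProb d v) + 1 = ∑ v ∈ B, nullProb d v := by
    rw [← nullProb_zero (n := n) (d := d) (p := p), Finset.sum_erase_add _ _ hB]
  have hnn : 0 ≤ ∑ v ∈ B.erase 0, nullProb d v := Finset.sum_nonneg fun v _ => nullProb_nonneg v
  have h6 : (((∑ v ∈ univ.filter (fun v : Fin n → ZMod p => v ≠ 0), nullProb d v) - 1 : ℝ) : ℂ)
      = 2 * ((∑ v ∈ B.erase 0, nullProb d v : ℝ) : ℂ)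
      - ((p : ℂ) ^ n)⁻¹ * (∑ v ∈ B, ∑ w ∈ B, chE d v w)
      + ((p : ℂ) ^ n)⁻¹ * ∑ v ∈ Bᶜ, ∑ w ∈ Bᶜ, chE d v w := by
    rw [← h4, ← h5] at h3
    push_cast at h3 ⊢
    linear_combination h3
  rw [← Real.norm_eq_abs, ← Complex.norm_real, h6]
  have n1 : ‖∑ v ∈ B, ∑ w ∈ B, chE d v w‖ ≤ (B.card : ℝ) ^ 2 := by
    refine (norm_sum_le _ _).trans ?_
    refine (Finset.sum_le_card_nsmul _ _ (B.card : ℝ) fun v _ => ?_).trans (by simp [sq])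
    refine (norm_sum_le _ _).trans ?_
    refine (Finset.sum_le_card_nsmul _ _ (1 : ℝ) fun w _ => norm_chE_le_one v w).trans (by simp)
  have n2 : ‖∑ v ∈ Bᶜ, ∑ w ∈ Bᶜ, chE d v w‖ ≤ ∑ v ∈ Bᶜ, ∑ w ∈ Bᶜ, ‖chE d v w‖ := by
    refine (norm_sum_le _ _).trans ?_
    exact Finset.sum_le_sum fun v _ => norm_sum_le _ _
  have n3 : ‖((p : ℂ) ^ n)⁻¹‖ = ((p : ℝ) ^ n)⁻¹ := by simp
  refine (norm_add_le _ _).trans (add_le_add ((norm_sub_le _ _).trans (add_le_add ?_ ?_)) ?_)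
  · rw [norm_mul, Complex.norm_real, Real.norm_of_nonneg hnn]; simp
  · rw [norm_mul, n3]; gcongr
  · rw [norm_mul, n3]; gcongr

end FF

section Bounds

lemma factorial_upper (k : ℕ) : (k.factorial : ℝ) ≤ Real.exp 1 * (k + 1) * (k / Real.exp 1) ^ k := by
  have main : ∀ k : ℕ, (((k + 1).factorial : ℕ) : ℝ)
      ≤ Real.exp 1 * (k + 1) * ((k + 1) / Real.exp 1) ^ (k + 1) := by
    intro k
    induction k with
    | zero =>
      simp
    | succ k ih =>
      have h1 : ((k : ℝ) + 1) ^ (k + 2) * Real.exp 1 ≤ ((k : ℝ) + 2) ^ (k + 2) := by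
        have h2 : ((k : ℝ) + 1) / (k + 2) ≤ Real.exp (-(1 / ((k : ℝ) + 2))) := by
          have := Real.add_one_le_exp (-(1 / ((k : ℝ) + 2)))
          refine le_trans (le_of_eq ?_) this
          field_simp; ring
        have h3 : (((k : ℝ) + 1) / (k + 2)) ^ (k + 2) ≤ Real.exp (-1) := by
          refine (pow_le_pow_left₀ (by positivity) h2 _).trans (le_of_eq ?_)
          rw [← Real.exp_nat_mul]
          congr 1
          push_cast
          field_simp
        rw [div_pow, div_le_iff₀ (by positivity)] at h3
        calc ((k : ℝ) + 1) ^ (k + 2) * Real.exp 1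
            ≤ (Real.exp (-1) * ((k : ℝ) + 2) ^ (k + 2)) * Real.exp 1 := by gcongr
          _ = (Real.exp (-1) * Real.exp 1) * ((k : ℝ) + 2) ^ (k + 2) := by ring
          _ = _ := by rw [← Real.exp_add]; simp
      rw [Nat.factorial_succ]
      push_cast
      push_cast at ih
      have he := Real.exp_pos 1
      calc ((k : ℝ) + 1 + 1) * ((k + 1).factorial : ℝ)
          ≤ ((k : ℝ) + 1 + 1) * (Real.exp 1 * (k + 1) * ((k + 1) / Real.exp 1) ^ (k + 1)) := by gcongr
        _ = ((k : ℝ) + 1 + 1) * Real.exp 1 * (((k : ℝ) + 1) ^ (k + 2) * Real.exp 1) / (Real.exp 1) ^ (k + 2) := by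
            rw [div_pow]; field_simp; ring
        _ ≤ ((k : ℝ) + 1 + 1) * Real.exp 1 * (((k : ℝ) + 2) ^ (k + 2)) / (Real.exp 1) ^ (k + 2) := by gcongr
        _ = _ := by
            rw [div_pow]
            have : (k : ℝ) + 1 + 1 = k + 2 := by ring
            rw [this]; ring
  rcases k with _ | k
  · simp
  · refine (main k).trans ?_
    push_cast
    gcongr
    linarith

lemma factorial_lower (N : ℕ) : ((N : ℝ) / Real.exp 1) ^ N ≤ N.factorial := by
  have h := Real.pow_div_factorial_le_exp (N : ℝ) (by positivity) N
  rw [div_le_iff₀ (by positivity)] at h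
  rw [div_pow, div_le_iff₀ (by positivity), ← Real.exp_nat_mul]
  simp only [mul_one]
  linarith

variable {n d p : ℕ} [Fact p.Prime]

/-- letter frequency -/
noncomputable def freq (v : Fin n → ZMod p) (a : ZMod p) : ℝ := (occ v a : ℝ) / n

/-- probability weight of `v` under its own frequencies -/
noncomputable def qw (v : Fin n → ZMod p) : ℝ := ∏ k, freq v (v k)

lemma occ_pos (v : Fin n → ZMod p) (k : Fin n) : 0 < occ v (v k) := by
  unfold occ; exact Finset.card_pos.2 ⟨k, by simp⟩

lemma freq_nonneg (v : Fin n → ZMod p) (a : ZMod p) : 0 ≤ freq v a := by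
  unfold freq; positivity

lemma freq_pos (v : Fin n → ZMod p) (k : Fin n) : 0 < freq v (v k) := by
  have := occ_pos v k
  have : 0 < n := k.pos
  unfold freq; positivity

lemma qw_pos (v : Fin n → ZMod p) : 0 < qw v := Finset.prod_pos fun k _ => freq_pos v k

lemma occ_fst (v : Fin n → ZMod p) (a : ZMod p) :
    occ (fun x : Fin n × Fin d => v x.1) a = occ v a * d := by
  unfold occ
  have : (univ.filter (fun x : Fin n × Fin d => v x.1 = a))
      = (univ.filter (fun k => v k = a)) ×ˢ (univ : Finset (Fin d)) := by
    ext x; simp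
  rw [this, Finset.card_product]; simp

lemma prod_fst {M : Type*} [CommMonoid M] (g : Fin n → M) :
    ∏ x : Fin n × Fin d, g x.1 = (∏ k, g k) ^ d := by
  rw [Fintype.prod_prod_type]
  simp [Finset.prod_pow]

lemma factorial_ratio (hn : 0 < n) (hd : 0 < d) (v : Fin n → ZMod p) :
    (∏ a, ((occ (fun x : Fin n × Fin d => v x.1) a).factorial : ℝ))
      ≤ (Real.exp 1 * (n * d + 1)) ^ p * (qw v) ^ d * (n * d).factorial := by
  set u : Fin n × Fin d → ZMod p := fun x => v x.1 with hu
  have he := Real.exp_pos 1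
  have h1 : (∏ a, ((occ u a).factorial : ℝ))
      ≤ ∏ a, ((Real.exp 1 * (n * d + 1)) * ((occ u a : ℝ) / Real.exp 1) ^ occ u a) := by
    refine Finset.prod_le_prod (fun _ _ => by positivity) fun a _ => ?_
    refine (factorial_upper _).trans ?_
    have : (occ u a : ℝ) ≤ n * d := by
      have := occ_le u a
      simp at this
      exact_mod_cast this
    gcongr
  refine h1.trans ?_
  rw [Finset.prod_mul_distrib]
  simp only [Finset.prod_const, Finset.card_univ, ZMod.card]
  rw [mul_assoc]
  refine mul_le_mul_of_nonneg_left ?_ (by positivity)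
  rw [← prod_letters u (fun a => (occ u a : ℝ) / Real.exp 1)]
  refine le_trans (le_of_eq ?_) (mul_le_mul_of_nonneg_left (factorial_lower (n * d))
    (pow_nonneg (qw_pos v).le d))
  have h2 : (((n * d : ℕ) : ℝ) / Real.exp 1) ^ (n * d) = ∏ x : Fin n × Fin d, (((n * d : ℕ) : ℝ) / Real.exp 1) := by
    rw [Finset.prod_const, Finset.card_univ, Fintype.card_prod, Fintype.card_fin, Fintype.card_fin]
  rw [h2, qw, ← prod_fst, ← Finset.prod_mul_distrib]
  refine Finset.prod_congr rfl fun x _ => ?_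
  rw [hu, occ_fst, freq]
  push_cast
  field_simp

/-- generic bound on the character expectation -/
lemma chE_bound (hn : 0 < n) (hd : 0 < d) (v w : Fin n → ZMod p) (r : ZMod p → ℝ)
    (hr : ∀ k, 0 < r (v k)) (K : ℝ)
    (hK : ∀ z : ZMod p → ℂ, (∀ a, ‖z a‖ = 1) →
      ∏ k, ‖∑ a, (r a : ℂ) * z a * (ZMod.stdAddChar (a * w k) : ℂ)‖ ≤ K) :
    ‖chE d v w‖ ≤ (Real.exp 1 * (n * d + 1)) ^ p * (qw v * (∏ k, r (v k))⁻¹ * K) ^ d := by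
  have h := perm_sum_bound (fun x : Fin n × Fin d => v x.1)
    (fun x a => (ZMod.stdAddChar (a * w x.1) : ℂ)) r (fun x => hr x.1) (K ^ d) (by
      intro z hz
      rw [prod_fst (fun k => ‖∑ a, (r a : ℂ) * z a * (ZMod.stdAddChar (a * w k) : ℂ)‖)]
      exact pow_le_pow_left₀ (Finset.prod_nonneg fun _ _ => norm_nonneg _) (hK z hz) d)
  have hK0 : 0 ≤ K := le_trans (Finset.prod_nonneg fun _ _ => norm_nonneg _) (hK (fun _ => 1) (by simp))
  unfold chE
  rw [norm_mul, norm_inv, Complex.norm_natCast, inv_mul_le_iff₀ (by positivity)]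
  refine h.trans ?_
  rw [prod_fst (fun k => r (v k)), ← inv_pow]
  have h0 : 0 < ∏ k, r (v k) := Finset.prod_pos fun k _ => hr k
  calc _ ≤ ((Real.exp 1 * (n * d + 1)) ^ p * (qw v) ^ d * (n * d).factorial) * (∏ k, r (v k))⁻¹ ^ d * K ^ d := by
        gcongr
        exact factorial_ratio hn hd v
    _ = _ := by rw [mul_pow, mul_pow]; ring

/-- dispersion functional -/
noncomputable def disp (v w : Fin n → ZMod p) : ℝ :=
  ∑ i, ∑ j, ∑ k, ∑ l, (1 - (ZMod.stdAddChar ((v i - v j) * (w k - w l)) : ℂ).re)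

lemma prod_sq_le_exp {ι : Type*} [Fintype ι] (y : ι → ℝ) (hy : ∀ i, 0 ≤ y i) :
    ∏ i, y i ≤ Real.exp (∑ i, (y i - 1)) := by
  rw [Real.exp_sum]
  refine Finset.prod_le_prod (fun i _ => hy i) fun i _ => ?_
  have := Real.add_one_le_exp (y i - 1)
  linarith

lemma sum_letters (v : Fin n → ZMod p) (g : ZMod p → ℂ) :
    ∑ a, (occ v a : ℂ) * g a = ∑ i, g (v i) := by
  rw [← Finset.sum_fiberwise univ v]
  refine Finset.sum_congr rfl fun a _ => ?_
  rw [occ, ← nsmul_eq_mul, ← Finset.sum_const]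
  refine Finset.sum_congr rfl fun x hx => ?_
  simp at hx; rw [hx]

lemma normSq_sum {ι : Type*} [Fintype ι] (f : ι → ℂ) :
    ((‖∑ i, f i‖ ^ 2 : ℝ) : ℂ) = ∑ i, ∑ j, f i * (starRingEnd ℂ) (f j) := by
  have : ((‖∑ i, f i‖ ^ 2 : ℝ) : ℂ) = (∑ i, f i) * (starRingEnd ℂ) (∑ i, f i) := by
    rw [Complex.mul_conj, Complex.normSq_eq_norm_sq]
  rw [this, map_sum, Finset.sum_mul_sum]

lemma psi_mul_conj (x y : ZMod p) : (ZMod.stdAddChar x : ℂ) * (starRingEnd ℂ) (ZMod.stdAddChar y : ℂ)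
    = ZMod.stdAddChar (x - y) := by
  rw [← AddChar.map_neg_eq_conj, ← AddChar.map_add_eq_mul, sub_eq_add_neg]

lemma char_sum_bound (hn : 0 < n) (w : Fin n → ZMod p) (t : ZMod p) :
    ‖∑ k, (ZMod.stdAddChar (t * w k) : ℂ)‖
      ≤ n - (∑ k, ∑ l, (1 - (ZMod.stdAddChar (t * (w k - w l)) : ℂ).re)) / (2 * n) := by
  set S := ∑ k, ∑ l, (1 - (ZMod.stdAddChar (t * (w k - w l)) : ℂ).re) with hS
  set y := ‖∑ k, (ZMod.stdAddChar (t * w k) : ℂ)‖ with hy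
  have h1 : y ^ 2 = n ^ 2 - S := by
    have := congrArg Complex.re (normSq_sum (fun k => (ZMod.stdAddChar (t * w k) : ℂ)))
    rw [Complex.ofReal_re] at this
    rw [hy, this, hS]
    simp only [Complex.re_sum, psi_mul_conj, Finset.sum_sub_distrib, ← mul_sub]
    simp [sq]
  have hn' : (0 : ℝ) < n := by exact_mod_cast hn
  have : y ≤ (n ^ 2 + y ^ 2) / (2 * n) := by
    rw [le_div_iff₀ (by positivity)]
    nlinarith [sq_nonneg (y - n)]
  refine this.trans (le_of_eq ?_)
  rw [h1]; field_simp; ring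

lemma boundB_aux (hn : 0 < n) (v w : Fin n → ZMod p) (z : ZMod p → ℂ) (hz : ∀ a, ‖z a‖ = 1) :
    ∑ k, ‖∑ a, (freq v a : ℂ) * z a * (ZMod.stdAddChar (a * w k) : ℂ)‖ ^ 2
      ≤ n - disp v w / (2 * n ^ 3) := by
  have hn' : (0 : ℝ) < n := by exact_mod_cast hn
  have hnc : (n : ℂ) ≠ 0 := by exact_mod_cast hn.ne'
  have h1 : ∀ k, ∑ a, (freq v a : ℂ) * z a * (ZMod.stdAddChar (a * w k) : ℂ)
      = (n : ℂ)⁻¹ * ∑ i, z (v i) * (ZMod.stdAddChar (v i * w k) : ℂ) := by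
    intro k
    rw [← sum_letters v (fun a => z a * (ZMod.stdAddChar (a * w k) : ℂ)), Finset.mul_sum]
    refine Finset.sum_congr rfl fun a _ => ?_
    unfold freq; push_cast; ring
  have h2 : ∑ k, ‖∑ i, z (v i) * (ZMod.stdAddChar (v i * w k) : ℂ)‖ ^ 2
      ≤ ∑ i, ∑ j, ‖∑ k, (ZMod.stdAddChar ((v i - v j) * w k) : ℂ)‖ := by
    have e : ((∑ k, ‖∑ i, z (v i) * (ZMod.stdAddChar (v i * w k) : ℂ)‖ ^ 2 : ℝ) : ℂ)
        = ∑ i, ∑ j, z (v i) * (starRingEnd ℂ) (z (v j)) * ∑ k, (ZMod.stdAddChar ((v i - v j) * w k) : ℂ) := by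
      rw [Complex.ofReal_sum]
      simp_rw [normSq_sum]
      rw [Finset.sum_comm]
      refine Finset.sum_congr rfl fun i _ => ?_
      rw [Finset.sum_comm]
      refine Finset.sum_congr rfl fun j _ => ?_
      rw [Finset.mul_sum]
      refine Finset.sum_congr rfl fun k _ => ?_
      rw [sub_mul, ← psi_mul_conj, map_mul (starRingEnd ℂ)]; ring
    have e2 : ‖((∑ k, ‖∑ i, z (v i) * (ZMod.stdAddChar (v i * w k) : ℂ)‖ ^ 2 : ℝ) : ℂ)‖
      ≤ ∑ i, ∑ j, ‖∑ k, (ZMod.stdAddChar ((v i - v j) * w k) : ℂ)‖ := by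
      rw [e]
      refine (norm_sum_le _ _).trans (Finset.sum_le_sum fun i _ => (norm_sum_le _ _).trans
        (Finset.sum_le_sum fun j _ => ?_))
      rw [norm_mul, norm_mul, RCLike.norm_conj, hz, hz]; simp
    rw [Complex.norm_real] at e2
    exact (le_abs_self _).trans e2
  have h3 : ∑ i, ∑ j, ‖∑ k, (ZMod.stdAddChar ((v i - v j) * w k) : ℂ)‖
      ≤ ∑ i : Fin n, ∑ j : Fin n, ((n : ℝ) - (∑ k, ∑ l, (1 - (ZMod.stdAddChar ((v i - v j) * (w k - w l)) : ℂ).re)) / (2 * n)) :=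
    Finset.sum_le_sum fun i _ => Finset.sum_le_sum fun j _ => char_sum_bound hn w _
  have h4 : ∑ i : Fin n, ∑ j : Fin n, ((n : ℝ) - (∑ k, ∑ l, (1 - (ZMod.stdAddChar ((v i - v j) * (w k - w l)) : ℂ).re)) / (2 * n))
      = n ^ 3 - disp v w / (2 * n) := by
    simp only [Finset.sum_sub_distrib, ← Finset.sum_div]
    simp [disp, Finset.sum_sub_distrib]; ring
  simp_rw [h1, norm_mul, mul_pow]
  rw [← Finset.mul_sum]
  have h5 := h2.trans (h3.trans h4.le)
  have : ‖(n : ℂ)⁻¹‖ ^ 2 = ((n : ℝ) ^ 2)⁻¹ := by simp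
  rw [this]
  calc _ ≤ ((n : ℝ) ^ 2)⁻¹ * (n ^ 3 - disp v w / (2 * n)) := by gcongr
    _ = _ := by field_simp

lemma boundA_aux (hn : 0 < n) (v w : Fin n → ZMod p) (z : ZMod p → ℂ) (hz : ∀ a, ‖z a‖ = 1) :
    ∏ k, ‖∑ a, (Real.sqrt (freq v a) : ℂ) * z a * (ZMod.stdAddChar (a * w k) : ℂ)‖ ^ 2
      ≤ qw w * (p : ℝ) ^ n := by
  have hn' : (0 : ℝ) < n := by exact_mod_cast hn
  have hp : (0 : ℝ) < p := by exact_mod_cast (Fact.out : p.Prime).pos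
  set c : ZMod p → ℂ := fun a => (Real.sqrt (freq v a) : ℂ) * z a with hc
  set Z : ZMod p → ℂ := fun b => ∑ a, c a * (ZMod.stdAddChar (a * b) : ℂ) with hZ
  have hfs : ∑ a, freq v a = 1 := by
    unfold freq
    rw [← Finset.sum_div]
    have : ∑ a, (occ v a : ℝ) = n := by
      have := sum_letters v (fun _ => 1)
      simp at this
      exact_mod_cast this
    rw [this]; field_simp
  have pars : ∑ b, ‖Z b‖ ^ 2 = p := by
    have e : ((∑ b, ‖Z b‖ ^ 2 : ℝ) : ℂ) = (p : ℂ) := by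
      rw [Complex.ofReal_sum]
      simp_rw [hZ, normSq_sum]
      rw [Finset.sum_comm]
      have : ∀ a, ∑ b, ∑ j, c a * (ZMod.stdAddChar (a * b) : ℂ) * (starRingEnd ℂ) (c j * (ZMod.stdAddChar (j * b) : ℂ))
          = (p : ℂ) * (freq v a : ℂ) := by
        intro a
        rw [Finset.sum_comm]
        have e1 : ∀ j, ∑ b, c a * (ZMod.stdAddChar (a * b) : ℂ) * (starRingEnd ℂ) (c j * (ZMod.stdAddChar (j * b) : ℂ))
            = c a * (starRingEnd ℂ) (c j) * if a = j then (p : ℂ) else 0 := by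
          intro j
          have := AddChar.sum_mulShift (a - j) (ZMod.isPrimitive_stdAddChar p)
          have e3 : ∑ b, c a * (ZMod.stdAddChar (a * b) : ℂ) * (starRingEnd ℂ) (c j * (ZMod.stdAddChar (j * b) : ℂ))
            = c a * (starRingEnd ℂ) (c j) * ∑ b, (ZMod.stdAddChar (b * (a - j)) : ℂ) := by
            rw [Finset.mul_sum]
            refine Finset.sum_congr rfl fun b _ => ?_
            rw [mul_sub, ← psi_mul_conj, map_mul (starRingEnd ℂ), mul_comm b a, mul_comm b j]; ring
          rw [e3, this]
          simp [sub_eq_zero]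
        simp_rw [e1]
        simp only [mul_ite, mul_zero, Finset.sum_ite_eq, mem_univ, if_true]
        rw [Complex.mul_conj, Complex.normSq_eq_norm_sq, hc]
        simp only [norm_mul, hz, mul_one, Complex.norm_real, Real.norm_eq_abs, sq_abs]
        rw [Real.sq_sqrt (freq_nonneg v a), mul_comm]
      rw [Finset.sum_congr rfl fun a _ => this a, ← Finset.mul_sum]
      have : ∑ a, (freq v a : ℂ) = 1 := by exact_mod_cast hfs
      rw [this, mul_one]
    exact_mod_cast e
  have h1 : ∀ k, ‖Z (w k)‖ ^ 2 = freq w (w k) * (p * (‖Z (w k)‖ ^ 2 / (p * freq w (w k)))) := by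
    intro k
    have := freq_pos w k
    field_simp
  have h2 : ∏ k, (‖Z (w k)‖ ^ 2 / (p * freq w (w k))) ≤ 1 := by
    refine (prod_sq_le_exp _ (fun k => by have := freq_pos w k; positivity)).trans ?_
    rw [Real.exp_le_one_iff, Finset.sum_sub_distrib]
    have h3 : ∑ k, ‖Z (w k)‖ ^ 2 / (p * freq w (w k)) ≤ n := by
      rw [← Finset.sum_fiberwise univ w]
      calc _ ≤ ∑ b, (n / p : ℝ) * ‖Z b‖ ^ 2 := by
            refine Finset.sum_le_sum fun b _ => ?_
            have : ∀ k ∈ univ.filter (fun k => w k = b), ‖Z (w k)‖ ^ 2 / (p * freq w (w k)) = ‖Z b‖ ^ 2 / (p * freq w b) := by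
              intro k hk; simp at hk; rw [hk]
            rw [Finset.sum_congr rfl this, Finset.sum_const, nsmul_eq_mul]
            change (occ w b : ℝ) * _ ≤ _
            unfold freq
            rcases Nat.eq_zero_or_pos (occ w b) with h | h
            · rw [h]; simp; positivity
            · have : (0 : ℝ) < occ w b := by exact_mod_cast h
              apply le_of_eq; field_simp
        _ = n := by rw [← Finset.mul_sum, pars]; field_simp
    simp; linarith
  calc ∏ k, ‖Z (w k)‖ ^ 2 = qw w * ((p : ℝ) ^ n * ∏ k, (‖Z (w k)‖ ^ 2 / (p * freq w (w k)))) := by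
        rw [Finset.prod_congr rfl fun k _ => h1 k, Finset.prod_mul_distrib, Finset.prod_mul_distrib]
        simp [qw]
    _ ≤ qw w * ((p : ℝ) ^ n * 1) := by
        have := (qw_pos w).le
        gcongr
    _ = _ := by ring

/-- the key bound -/
lemma chE_key (hn : 0 < n) (hd : 3 ≤ d) (v w : Fin n → ZMod p) :
    ‖chE d v w‖ ≤ (Real.exp 1 * (n * d + 1)) ^ p * (Real.exp (-(disp v w / (4 * n ^ 3))) *
      (qw v * qw w * (p : ℝ) ^ n)) := by
  have hn' : (0 : ℝ) < n := by exact_mod_cast hn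
  have hp : (0 : ℝ) < p := by exact_mod_cast (Fact.out : p.Prime).pos
  have hqv := qw_pos v
  have hqw := qw_pos w
  set L : ℝ := (Real.exp 1 * (n * d + 1)) ^ p with hL
  have hL0 : 0 < L := by positivity
  set E : ℝ := Real.exp (-(disp v w / (4 * n ^ 3))) with hE
  have hE0 : 0 < E := Real.exp_pos _
  set Y : ℝ := qw v * qw w * (p : ℝ) ^ n with hY
  have hY0 : 0 < Y := by positivity
  -- bound B
  have hB : ‖chE d v w‖ ≤ L * E ^ d := by
    have := chE_bound (d := d) hn (by omega) v w (freq v) (freq_pos v) E (by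
      intro z hz
      have h1 := prod_sq_le_exp (fun k => ‖∑ a, (freq v a : ℂ) * z a * (ZMod.stdAddChar (a * w k) : ℂ)‖ ^ 2)
        (fun k => by positivity)
      have h2 := boundB_aux hn v w z hz
      have h3 : ∏ k, ‖∑ a, (freq v a : ℂ) * z a * (ZMod.stdAddChar (a * w k) : ℂ)‖ ^ 2 ≤ E ^ 2 := by
        refine h1.trans ?_
        rw [hE, ← Real.exp_nat_mul]
        apply Real.exp_le_exp.2
        rw [Finset.sum_sub_distrib]
        simp only [Finset.sum_const, Finset.card_univ, Fintype.card_fin, nsmul_eq_mul, mul_one]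
        have : ((2 : ℕ) : ℝ) * -(disp v w / (4 * n ^ 3)) = - (disp v w / (2 * n ^ 3)) := by
          push_cast; field_simp; ring
        rw [this]; linarith
      rw [Finset.prod_pow] at h3
      exact le_of_pow_le_pow_left₀ (by norm_num) hE0.le h3)
    have e : qw v * (∏ k, freq v (v k))⁻¹ * E = E := by
      change qw v * (qw v)⁻¹ * E = E
      field_simp
    rwa [e] at this
  have hA : ‖chE d v w‖ ≤ L * (Real.sqrt Y) ^ d := by
    have := chE_bound (d := d) hn (by omega) v w (fun a => Real.sqrt (freq v a))
      (fun k => Real.sqrt_pos.2 (freq_pos v k)) (Real.sqrt (qw w * (p : ℝ) ^ n)) (by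
      intro z hz
      have h3 := boundA_aux hn v w z hz
      rw [Finset.prod_pow] at h3
      exact Real.le_sqrt_of_sq_le h3)
    have e : qw v * (∏ k, Real.sqrt (freq v (v k)))⁻¹ * Real.sqrt (qw w * (p : ℝ) ^ n) = Real.sqrt Y := by
      have e1 : ∏ k, Real.sqrt (freq v (v k)) = Real.sqrt (qw v) := by
        rw [qw, Real.sqrt_prod]
        intro k _; exact freq_nonneg _ _
      rw [e1, hY, mul_assoc (qw v) (qw w), Real.sqrt_mul hqv.le]
      have : Real.sqrt (qw v) * Real.sqrt (qw v) = qw v := Real.mul_self_sqrt hqv.le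
      have h0 : Real.sqrt (qw v) ≠ 0 := (Real.sqrt_pos.2 hqv).ne'
      congr 1
      rw [← div_eq_mul_inv, div_eq_iff h0, this]
    rwa [e] at this
  set f := ‖chE d v w‖ / L with hf
  have hf0 : 0 ≤ f := by positivity
  have hfB : f ≤ E ^ d := by rw [hf, div_le_iff₀ hL0, mul_comm]; exact hB
  have hfA : f ≤ (Real.sqrt Y) ^ d := by rw [hf, div_le_iff₀ hL0, mul_comm]; exact hA
  have hdisp : 0 ≤ disp v w := by
    unfold disp
    refine Finset.sum_nonneg fun i _ => Finset.sum_nonneg fun j _ => Finset.sum_nonneg fun k _ =>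
      Finset.sum_nonneg fun l _ => ?_
    have := Complex.re_le_norm (ZMod.stdAddChar ((v i - v j) * (w k - w l)) : ℂ)
    rw [AddChar.norm_apply] at this
    linarith
  have hE1 : E ≤ 1 := by
    rw [hE, Real.exp_le_one_iff]
    have : 0 ≤ disp v w / (4 * n ^ 3) := by positivity
    linarith
  have hfin : f ≤ E * Y := by
    have h1 : f ^ d ≤ (E ^ (d - 2) * Y) ^ d := by
      calc f ^ d = f ^ (d - 2) * f ^ 2 := by rw [← pow_add]; congr 1; omega
        _ ≤ (E ^ d) ^ (d - 2) * ((Real.sqrt Y) ^ d) ^ 2 := by gcongr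
        _ = _ := by
          rw [mul_pow, ← pow_mul, ← pow_mul, ← pow_mul, mul_comm d 2, pow_mul (Real.sqrt Y), Real.sq_sqrt hY0.le,
            mul_comm d]
    have h2 : f ≤ E ^ (d - 2) * Y := le_of_pow_le_pow_left₀ (by omega) (by positivity) h1
    refine h2.trans ?_
    gcongr
    calc E ^ (d - 2) ≤ E ^ 1 := pow_le_pow_of_le_one hE0.le hE1 (by omega)
      _ = E := pow_one E
  rw [hf, div_le_iff₀ hL0] at hfin
  linarith

lemma sum_qw_le : ∑ v : Fin n → ZMod p, qw v ≤ ((n : ℝ) + 1) ^ p := by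
  rcases Nat.eq_zero_or_pos n with rfl | hn
  · simp [qw]
  have hn' : (0 : ℝ) < n := by exact_mod_cast hn
  let ty : (Fin n → ZMod p) → (ZMod p → Fin (n + 1)) := fun v a =>
    ⟨occ v a, by have := occ_le v a; simp at this; omega⟩
  rw [← Finset.sum_fiberwise univ ty]
  have : ∀ t ∈ (univ : Finset (ZMod p → Fin (n + 1))), ∑ v ∈ univ.filter (fun v => ty v = t), qw v ≤ 1 := by
    intro t _
    by_cases ht : ∃ v, ty v = t
    · obtain ⟨v0, hv0⟩ := ht
      have h1 : ∀ v ∈ univ.filter (fun v => ty v = t), qw v = ∏ k, freq v0 (v k) := by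
        intro v hv
        simp only [mem_filter, mem_univ, true_and] at hv
        unfold qw
        refine Finset.prod_congr rfl fun k _ => ?_
        have := congrFun (hv.trans hv0.symm) (v k)
        simp only [ty, Fin.mk.injEq] at this
        unfold freq; rw [this]
      rw [Finset.sum_congr rfl h1]
      refine (Finset.sum_le_sum_of_subset_of_nonneg (Finset.subset_univ _)
        (fun v _ _ => Finset.prod_nonneg fun k _ => freq_nonneg _ _)).trans ?_
      rw [← Fintype.prod_sum (fun (_ : Fin n) a => freq v0 a)]
      have hfs : ∑ a, freq v0 a = 1 := by
        unfold freq
        rw [← Finset.sum_div]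
        have : ∑ a, (occ v0 a : ℝ) = n := by
          have := sum_letters v0 (fun _ => 1)
          simp at this
          exact_mod_cast this
        rw [this]; field_simp
      simp [hfs]
    · push Not at ht
      rw [Finset.filter_false_of_mem (fun v _ => ht v)]
      simp
  refine (Finset.sum_le_card_nsmul _ _ _ this).trans ?_
  simp

end Bounds


section Part4
variable {n d p : ℕ} [Fact p.Prime]

/-- one minus the real part of the standard character -/
noncomputable def phi (x : ZMod p) : ℝ := 1 - (ZMod.stdAddChar x : ℂ).re

lemma phi_lb (x : ZMod p) : 8 * ((x.valMinAbs : ℤ) : ℝ) ^ 2 / (p : ℝ) ^ 2 ≤ phi x := by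
  have hp : (0 : ℝ) < p := by exact_mod_cast (Fact.out : p.Prime).pos
  unfold phi
  have h1 : (ZMod.stdAddChar x : ℂ) = Complex.exp (2 * Real.pi * Complex.I * (x.valMinAbs : ℤ) / p) := by
    conv_lhs => rw [← ZMod.coe_valMinAbs x]
    exact ZMod.stdAddChar_coe _
  have h2 : (2 * Real.pi * Complex.I * (x.valMinAbs : ℤ) / p : ℂ)
      = ((2 * Real.pi * (x.valMinAbs : ℤ) / p : ℝ) : ℂ) * Complex.I := by
    push_cast; ring
  rw [h1, h2, Complex.exp_ofReal_mul_I_re]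
  have habs : |((x.valMinAbs : ℤ) : ℝ)| ≤ p / 2 := by
    have := ZMod.natAbs_valMinAbs_le x
    have h3 : ((x.valMinAbs.natAbs : ℕ) : ℝ) ≤ ((p / 2 : ℕ) : ℝ) := by exact_mod_cast this
    have h4 : ((p / 2 : ℕ) : ℝ) ≤ (p : ℝ) / 2 := Nat.cast_div_le
    rw [Nat.cast_natAbs] at h3
    push_cast at h3
    linarith
  have h5 : |2 * Real.pi * (x.valMinAbs : ℤ) / p| ≤ Real.pi := by
    rw [abs_div, abs_mul, abs_of_pos (by positivity : (0 : ℝ) < 2 * Real.pi), abs_of_pos hp,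
      div_le_iff₀ hp]
    nlinarith [Real.pi_pos]
  have h6 := Real.cos_le_one_sub_mul_cos_sq h5
  have h7 : 2 / Real.pi ^ 2 * (2 * Real.pi * (x.valMinAbs : ℤ) / p) ^ 2
      = 8 * ((x.valMinAbs : ℤ) : ℝ) ^ 2 / (p : ℝ) ^ 2 := by
    field_simp; ring
  linarith

lemma phi_nonneg (x : ZMod p) : 0 ≤ phi x := le_trans (by positivity) (phi_lb x)

lemma phi_ne (x : ZMod p) (hx : x ≠ 0) : 8 / (p : ℝ) ^ 2 ≤ phi x := by
  refine le_trans ?_ (phi_lb x)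
  have hp : (0 : ℝ) < p := by exact_mod_cast (Fact.out : p.Prime).pos
  have h : (x.valMinAbs : ℤ) ≠ 0 := by rwa [Ne, ZMod.valMinAbs_eq_zero]
  have h1 : (1 : ℝ) ≤ ((x.valMinAbs : ℤ) : ℝ) ^ 2 := by
    have : (1 : ℤ) ≤ x.valMinAbs ^ 2 := by
      have := sq_pos_of_ne_zero (a := x.valMinAbs) h; omega
    exact_mod_cast this
  gcongr
  linarith

/-- number of coordinates different from `c` -/
def off (v : Fin n → ZMod p) (c : ZMod p) : ℕ := (univ.filter (fun k => v k ≠ c)).card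

lemma sum_ge_card {ι : Type*} [Fintype ι] (Q : ι → Prop) [DecidablePred Q] (f : ι → ℝ) (T : ℝ)
    (hf : ∀ i, 0 ≤ f i) (h : ∀ i, Q i → T ≤ f i) :
    ((univ.filter Q).card : ℝ) * T ≤ ∑ i, f i := by
  calc ((univ.filter Q).card : ℝ) * T = ∑ i ∈ univ.filter Q, T := by simp
    _ ≤ ∑ i ∈ univ.filter Q, f i := Finset.sum_le_sum fun i hi => h i (by simpa using hi)
    _ ≤ ∑ i, f i := Finset.sum_le_sum_of_subset_of_nonneg (Finset.subset_univ _) fun i _ _ => hf i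

lemma disp_ge (v w : Fin n → ZMod p) (s T : ℝ) (hT : 0 ≤ T)
    (h1 : ∀ c, s ≤ off v c)
    (h2 : ∀ t : ZMod p, t ≠ 0 → T ≤ ∑ k, ∑ l, phi (t * (w k - w l))) :
    n * (s * T) ≤ disp v w := by
  have : disp v w = ∑ i, ∑ j, ∑ k, ∑ l, phi ((v i - v j) * (w k - w l)) := rfl
  rw [this]
  calc n * (s * T) = ∑ i : Fin n, s * T := by simp
    _ ≤ _ := Finset.sum_le_sum fun i _ => ?_
  refine le_trans (mul_le_mul_of_nonneg_right (h1 (v i)) hT) ?_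
  refine sum_ge_card _ _ _ (fun j => Finset.sum_nonneg fun _ _ => Finset.sum_nonneg fun _ _ => phi_nonneg _) ?_
  intro j hj
  exact h2 _ (sub_ne_zero.2 (Ne.symm hj))

lemma disp_symm (v w : Fin n → ZMod p) : disp v w = disp w v := by
  have h : ∀ v w : Fin n → ZMod p, disp v w = ∑ x : Fin n × Fin n, ∑ y : Fin n × Fin n,
      phi ((v x.1 - v x.2) * (w y.1 - w y.2)) := by
    intro v w
    simp only [Fintype.sum_prod_type]
    rfl
  rw [h, h, Finset.sum_comm]
  simp only [mul_comm]

lemma disp_case1 (v w : Fin n → ZMod p) (s t : ℝ) (ht : 0 ≤ t)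
    (h1 : ∀ c, s ≤ off v c) (h2 : ∀ c, t ≤ off w c) :
    n * (s * (n * (t * (8 / (p : ℝ) ^ 2)))) ≤ disp v w := by
  refine disp_ge v w s _ (by positivity) h1 ?_
  intro r hr
  calc n * (t * (8 / (p : ℝ) ^ 2)) = ∑ i : Fin n, t * (8 / (p : ℝ) ^ 2) := by simp
    _ ≤ _ := Finset.sum_le_sum fun i _ => ?_
  refine le_trans (mul_le_mul_of_nonneg_right (h2 (w i)) (by positivity)) ?_
  refine sum_ge_card _ _ _ (fun j => phi_nonneg _) ?_
  intro j hj
  exact phi_ne _ (mul_ne_zero hr (sub_ne_zero.2 (Ne.symm hj)))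

/-- set of points close to a progression translate -/
def nearSet (q : ℕ) (t b : ZMod p) : Finset (ZMod p) :=
  univ.filter (fun x => (t * (b - x)).valMinAbs.natAbs * q < p)

lemma disp_case2 (q : ℕ) (hq : 0 < q) (v w : Fin n → ZMod p) (s : ℝ) (hs : 0 ≤ s)
    (h1 : ∀ c, s ≤ off v c)
    (h2 : ∀ t : ZMod p, t ≠ 0 → ∀ b, ((univ.filter (fun k => w k ∈ nearSet q t b)).card : ℝ) ≤ n / 2) :
    n * (s * (n * (n / 2 * (8 / (q : ℝ) ^ 2)))) ≤ disp v w := by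
  have hp : (0 : ℝ) < p := by exact_mod_cast (Fact.out : p.Prime).pos
  have hq' : (0 : ℝ) < q := by exact_mod_cast hq
  refine disp_ge v w s _ (by positivity) h1 ?_
  intro r hr
  calc n * (n / 2 * (8 / (q : ℝ) ^ 2)) = ∑ i : Fin n, (n : ℝ) / 2 * (8 / (q : ℝ) ^ 2) := by simp
    _ ≤ _ := Finset.sum_le_sum fun i _ => ?_
  have hc : ((n : ℝ) / 2) ≤ ((univ.filter (fun k => w k ∉ nearSet q r (w i))).card : ℝ) := by
    have := Finset.card_filter_add_card_filter_not (s := (univ : Finset (Fin n))) (fun k => w k ∈ nearSet q r (w i))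
    have h3 : ((univ.filter (fun k => w k ∈ nearSet q r (w i))).card : ℝ)
      + ((univ.filter (fun k => w k ∉ nearSet q r (w i))).card : ℝ) = n := by
      rw [Finset.card_univ, Fintype.card_fin] at this
      exact_mod_cast this
    linarith [h2 r hr (w i)]
  refine le_trans (mul_le_mul_of_nonneg_right hc (by positivity)) ?_
  refine sum_ge_card _ _ _ (fun j => phi_nonneg _) ?_
  intro j hj
  refine le_trans ?_ (phi_lb _)
  simp only [nearSet, Finset.mem_filter, Finset.mem_univ, true_and, not_lt] at hj
  set m := (r * (w i - w j)).valMinAbs with hm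
  have h4 : (p : ℝ) ≤ |(m : ℝ)| * q := by
    have : (p : ℝ) ≤ ((m.natAbs * q : ℕ) : ℝ) := by exact_mod_cast hj
    rw [Nat.cast_mul, Nat.cast_natAbs] at this
    push_cast at this
    exact this
  have h5 : (p : ℝ) ^ 2 ≤ (m : ℝ) ^ 2 * q ^ 2 := by
    rw [← sq_abs (m : ℝ), ← mul_pow]
    exact pow_le_pow_left₀ hp.le h4 2
  rw [div_le_div_iff₀ (by positivity) (by positivity)]
  nlinarith

lemma card_nearSet (q : ℕ) (hq : 0 < q) (hqp : q ≤ p) (t b : ZMod p) (ht : t ≠ 0) :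
    ((nearSet q t b).card : ℝ) ≤ 3 * p / q := by
  have hp : (0 : ℝ) < p := by exact_mod_cast (Fact.out : p.Prime).pos
  have hq' : (0 : ℝ) < q := by exact_mod_cast hq
  have h1 : (nearSet q t b).card ≤ (Finset.Icc (-((p / q : ℕ) : ℤ)) ((p / q : ℕ) : ℤ)).card := by
    refine Finset.card_le_card_of_injOn (fun x => (t * (b - x)).valMinAbs) ?_ ?_
    · intro x hx
      simp only [nearSet, Finset.coe_filter, Finset.mem_univ, true_and, Set.mem_setOf_eq] at hx
      have : (t * (b - x)).valMinAbs.natAbs ≤ p / q := by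
        rw [Nat.le_div_iff_mul_le hq]; exact hx.le
      simp only [Finset.coe_Icc, Set.mem_Icc]
      omega
    · intro x _ y _ hxy
      have := ZMod.injective_valMinAbs hxy
      have := mul_left_cancel₀ ht this
      simpa using this
  rw [Int.card_Icc] at h1
  have h2 : (nearSet q t b).card ≤ 2 * (p / q) + 1 := by omega
  have h3 : ((nearSet q t b).card : ℝ) ≤ 2 * ((p / q : ℕ) : ℝ) + 1 := by exact_mod_cast h2
  have h4 : ((p / q : ℕ) : ℝ) ≤ (p : ℝ) / q := Nat.cast_div_le
  have h5 : (1 : ℝ) ≤ p / q := by rw [le_div_iff₀ hq']; simpa using (by exact_mod_cast hqp : (q : ℝ) ≤ p)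
  calc _ ≤ _ := h3
    _ ≤ 3 * (p / q : ℝ) := by linarith
    _ = _ := by ring

lemma card_count (T : Finset (ZMod p)) (μ m : ℝ) (hμ : 1 ≤ μ) :
    ((univ.filter (fun v : Fin n → ZMod p => m ≤ ((univ.filter (fun k => v k ∈ T)).card : ℝ))).card : ℝ) * μ ^ m
      ≤ (μ * T.card + p) ^ n := by
  classical
  have hμ0 : 0 < μ := by linarith
  have h1 : ∑ v : Fin n → ZMod p, ∏ k, (if v k ∈ T then μ else 1) = (∑ x : ZMod p, if x ∈ T then μ else 1) ^ n := by
    rw [← Fintype.piFinset_univ]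
    rw [Finset.sum_prod_piFinset univ (fun (_ : Fin n) (x : ZMod p) => if x ∈ T then μ else 1)]
    simp
  have h2 : (∑ x : ZMod p, if x ∈ T then μ else 1) ≤ μ * T.card + p := by
    have : ∀ x : ZMod p, (if x ∈ T then μ else 1) ≤ (if x ∈ T then μ else 0) + 1 := by
      intro x; split_ifs <;> linarith
    refine (Finset.sum_le_sum fun x _ => this x).trans ?_
    rw [Finset.sum_add_distrib]
    simp [ZMod.card, mul_comm]
  refine le_trans ?_ (h1.le.trans (pow_le_pow_left₀ (Finset.sum_nonneg fun x _ => by split_ifs <;> linarith) h2 n))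
  refine sum_ge_card _ _ _ (fun v => Finset.prod_nonneg fun k _ => by split_ifs <;> linarith) ?_
  intro v hv
  have : ∏ k, (if v k ∈ T then μ else 1) = μ ^ ((univ.filter (fun k => v k ∈ T)).card : ℝ) := by
    rw [Finset.prod_ite]; simp
  rw [this]
  exact Real.rpow_le_rpow_of_exponent_le hμ hv

end Part4


section Part5

lemma descFactorial_ratio (z N k : ℕ) (h : z ≤ N) :
    z.descFactorial k * N ^ k ≤ N.descFactorial k * z ^ k := by
  induction k with
  | zero => simp
  | succ k ih =>
    rw [Nat.descFactorial_succ, Nat.descFactorial_succ, pow_succ, pow_succ]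
    have h1 : (z - k) * N ≤ (N - k) * z := by
      rw [Nat.sub_mul, Nat.sub_mul, Nat.mul_comm N z]
      exact Nat.sub_le_sub_left (Nat.mul_le_mul_left k h) _
    calc (z - k) * z.descFactorial k * (N ^ k * N) = (z.descFactorial k * N ^ k) * ((z - k) * N) := by ring
      _ ≤ (N.descFactorial k * z ^ k) * ((N - k) * z) := Nat.mul_le_mul ih h1
      _ = _ := by ring

lemma occ_true {X : Type*} [Fintype X] [DecidableEq X] (W : Finset X) :
    occ (fun x => decide (x ∈ W)) true = W.card ∧
    occ (fun x => decide (x ∈ W)) false = Fintype.card X - W.card := by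
  unfold occ
  constructor
  · simp
  · rw [← Finset.card_compl]
    congr 1
    ext x; simp

lemma card_perm_into {X : Type*} [Fintype X] [DecidableEq X] (W Z : Finset X) :
    (univ.filter (fun P : Equiv.Perm X => ∀ x, P x ∈ W → x ∈ Z)).card * Fintype.card X ^ W.card
      ≤ (Fintype.card X).factorial * Z.card ^ W.card := by
  classical
  set N := Fintype.card X with hN
  have hsub : (univ.filter (fun P : Equiv.Perm X => ∀ x, P x ∈ W → x ∈ Z)) ⊆
      (Z.powersetCard W.card).biUnion (fun Y => univ.filter (fun P : Equiv.Perm X =>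
        (fun x => decide (x ∈ W)) ∘ P = fun x => decide (x ∈ Y))) := by
    intro P hP
    simp only [Finset.mem_filter, Finset.mem_univ, true_and] at hP
    simp only [Finset.mem_biUnion, Finset.mem_powersetCard, Finset.mem_filter, Finset.mem_univ, true_and]
    refine ⟨W.map P.symm.toEmbedding, ⟨?_, by simp⟩, ?_⟩
    · intro x hx
      simp only [Finset.mem_map_equiv, Equiv.symm_symm] at hx
      exact hP x hx
    · funext x
      simp [Finset.mem_map_equiv]
  have h2 : ∀ Y ∈ Z.powersetCard W.card, (univ.filter (fun P : Equiv.Perm X =>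
        (fun x => decide (x ∈ W)) ∘ P = fun x => decide (x ∈ Y))).card
        = W.card.factorial * (N - W.card).factorial := by
    intro Y hY
    rw [Finset.mem_powersetCard] at hY
    have := card_perm_fiber (fun x => decide (x ∈ W)) (fun x => decide (x ∈ Y))
    have hW := occ_true W
    have hY' := occ_true Y
    rw [this, if_pos]
    · simp [Fintype.prod_bool, hW.1, hW.2, hN]
    · intro b
      cases b
      · rw [hW.2, hY'.2, hY.2]
      · rw [hW.1, hY'.1, hY.2]
  have h3 : (univ.filter (fun P : Equiv.Perm X => ∀ x, P x ∈ W → x ∈ Z)).card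
      ≤ Z.card.choose W.card * (W.card.factorial * (N - W.card).factorial) := by
    refine (Finset.card_le_card hsub).trans (Finset.card_biUnion_le.trans ?_)
    rw [Finset.sum_congr rfl h2]; simp
  have hWN : W.card ≤ N := Finset.card_le_univ W
  have hZN : Z.card ≤ N := Finset.card_le_univ Z
  calc _ ≤ Z.card.choose W.card * (W.card.factorial * (N - W.card).factorial) * N ^ W.card :=
        Nat.mul_le_mul_right _ h3
    _ = (Z.card.descFactorial W.card * N ^ W.card) * (N - W.card).factorial := by
        rw [Nat.descFactorial_eq_factorial_mul_choose]; ring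
    _ ≤ (N.descFactorial W.card * Z.card ^ W.card) * (N - W.card).factorial :=
        Nat.mul_le_mul_right _ (descFactorial_ratio _ _ _ hZN)
    _ = ((N - W.card).factorial * N.descFactorial W.card) * Z.card ^ W.card := by ring
    _ = _ := by rw [Nat.factorial_mul_descFactorial hWN]

variable {n d p : ℕ} [Fact p.Prime]

lemma nullProb_sparse (hd : 0 < d) (hn : 0 < n) (v : Fin n → ZMod p) (hk : d * off v 0 ≤ n) :
    nullProb d v ≤ (n.choose (d * off v 0 / 2) : ℝ) * (((d * off v 0 / 2 : ℕ) : ℝ) / n) ^ (d * off v 0) := by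
  classical
  set S : Finset (Fin n) := univ.filter (fun k => v k ≠ 0) with hS
  have hSo : off v 0 = S.card := rfl
  set k := off v 0 with hkdef
  set m := d * k / 2 with hm
  set W : Finset (Fin n × Fin d) := S ×ˢ univ with hW
  have hWc : W.card = d * k := by rw [hW, Finset.card_product, hSo]; simp [mul_comm]
  have hsub : (univ.filter (fun P : Equiv.Perm (Fin n × Fin d) =>
      Matrix.mulVec ((adjMat n d P).map (Int.cast : ℤ → ZMod p)) v = 0)) ⊆
      ((univ : Finset (Fin n)).powersetCard m).biUnion (fun R => univ.filter
        (fun P : Equiv.Perm (Fin n × Fin d) => ∀ x, P x ∈ W → x ∈ R ×ˢ (univ : Finset (Fin d)))) := by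
    intro P hP
    simp only [Finset.mem_filter, Finset.mem_univ, true_and] at hP
    rw [mulVec_adj_eq_zero] at hP
    set V : Finset (Fin n × Fin d) := W.map P.symm.toEmbedding with hV
    have hVc : V.card = d * k := by rw [hV, Finset.card_map, hWc]
    have hmemV : ∀ x, x ∈ V ↔ v (P x).1 ≠ 0 := by
      intro x
      rw [hV, Finset.mem_map_equiv, Equiv.symm_symm, hW, Finset.mem_product]
      simp [hS]
    set R0 := V.image Prod.fst with hR0
    have h2 : R0.card * 2 ≤ V.card := by
      rw [mul_comm]
      rw [Finset.card_eq_sum_card_image Prod.fst V, ← hR0]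
      rw [mul_comm, ← smul_eq_mul]
      refine Finset.card_nsmul_le_sum _ _ _ ?_
      intro a ha
      obtain ⟨x, hx, hxa⟩ := Finset.mem_image.1 ha
      by_contra hlt
      have hxm : x ∈ V.filter (fun y => y.1 = a) := by simp [hx, hxa]
      have h1 : (V.filter (fun y => y.1 = a)).card = 1 := by
        have := Finset.card_pos.2 ⟨x, hxm⟩
        omega
      obtain ⟨y, hy⟩ := Finset.card_eq_one.1 h1
      have hyx : x = y := by rw [hy] at hxm; simpa using hxm
      subst hyx
      have h0 := hP a
      rw [Finset.sum_eq_single x.2] at h0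
      · have : (a, x.2) = x := by rw [← hxa]
        rw [this] at h0
        exact (hmemV x).1 hx h0
      · intro i _ hi
        by_contra hne
        have : (a, i) ∈ V.filter (fun y => y.1 = a) := by
          rw [Finset.mem_filter]; exact ⟨(hmemV _).2 hne, rfl⟩
        rw [hy, Finset.mem_singleton] at this
        exact hi (by rw [← this])
      · simp
    have hR0m : R0.card ≤ m := by omega
    have hmn : m ≤ (univ : Finset (Fin n)).card := by simp; omega
    obtain ⟨R, hR1, hR2, hR3⟩ := Finset.exists_subsuperset_card_eq (Finset.subset_univ R0) hR0m hmn
    simp only [Finset.mem_biUnion, Finset.mem_powersetCard, Finset.mem_filter, Finset.mem_univ, true_and]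
    refine ⟨R, ⟨hR2, hR3⟩, ?_⟩
    intro x hx
    simp only [Finset.mem_product, Finset.mem_univ, and_true]
    apply hR1
    rw [hR0]
    refine Finset.mem_image_of_mem _ ?_
    rw [hV, Finset.mem_map_equiv, Equiv.symm_symm]; exact hx
  have hNpos : (0 : ℝ) < (n * d).factorial := by exact_mod_cast Nat.factorial_pos _
  have hnR : (0 : ℝ) < n := by exact_mod_cast hn
  have hdR : (0 : ℝ) < d := by exact_mod_cast hd
  have h4 : ∀ R ∈ (univ : Finset (Fin n)).powersetCard m, ((univ.filter
        (fun P : Equiv.Perm (Fin n × Fin d) => ∀ x, P x ∈ W → x ∈ R ×ˢ (univ : Finset (Fin d)))).card : ℝ)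
        ≤ (n * d).factorial * ((m : ℝ) / n) ^ (d * k) := by
    intro R hR
    rw [Finset.mem_powersetCard] at hR
    have := card_perm_into W (R ×ˢ (univ : Finset (Fin d)))
    rw [hWc, Finset.card_product, hR.2] at this
    simp only [Fintype.card_prod, Fintype.card_fin, Finset.card_univ] at this
    have h5 : ((univ.filter
        (fun P : Equiv.Perm (Fin n × Fin d) => ∀ x, P x ∈ W → x ∈ R ×ˢ (univ : Finset (Fin d)))).card : ℝ)
        * ((n : ℝ) * d) ^ (d * k) ≤ (n * d).factorial * ((m : ℝ) * d) ^ (d * k) := by exact_mod_cast this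
    have h6 : ((m : ℝ) / n) = (m * d) / (n * d) := by field_simp
    rw [h6, div_pow, ← mul_div_assoc, le_div_iff₀ (by positivity)]
    exact h5
  unfold nullProb
  rw [div_le_iff₀ hNpos]
  calc _ ≤ ((((univ : Finset (Fin n)).powersetCard m).biUnion (fun R => univ.filter
        (fun P : Equiv.Perm (Fin n × Fin d) => ∀ x, P x ∈ W → x ∈ R ×ˢ (univ : Finset (Fin d))))).card : ℝ) := by
        exact_mod_cast Finset.card_le_card hsub
    _ ≤ ∑ R ∈ (univ : Finset (Fin n)).powersetCard m, ((univ.filter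
        (fun P : Equiv.Perm (Fin n × Fin d) => ∀ x, P x ∈ W → x ∈ R ×ˢ (univ : Finset (Fin d)))).card : ℝ) := by
        exact_mod_cast Finset.card_biUnion_le
    _ ≤ ∑ R ∈ (univ : Finset (Fin n)).powersetCard m, (n * d).factorial * ((m : ℝ) / n) ^ (d * k) :=
        Finset.sum_le_sum h4
    _ = _ := by rw [Finset.sum_const, Finset.card_powersetCard]; simp; ring

lemma nullProb_eq_zero (v : Fin n → ZMod p) (c : ZMod p) (hc : c ≠ 0) (hpd : Nat.gcd p d = 1)
    (h : d * off v c < n) : nullProb d v = 0 := by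
  classical
  unfold nullProb
  rw [div_eq_zero_iff]; left
  rw [Nat.cast_eq_zero, Finset.card_eq_zero, Finset.filter_eq_empty_iff]
  intro P _ hP
  rw [mulVec_adj_eq_zero] at hP
  set S : Finset (Fin n) := univ.filter (fun k => v k ≠ c) with hS
  set W : Finset (Fin n × Fin d) := S ×ˢ univ with hW
  set V : Finset (Fin n × Fin d) := W.map P.symm.toEmbedding with hV
  have hVc : V.card = d * off v c := by
    rw [hV, Finset.card_map, hW, Finset.card_product]; simp [off, mul_comm, hS]
  have h1 : (V.image Prod.fst).card < (univ : Finset (Fin n)).card := by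
    refine lt_of_le_of_lt Finset.card_image_le ?_
    simp; omega
  obtain ⟨k, -, hk⟩ := Finset.exists_mem_notMem_of_card_lt_card h1
  have h2 : ∀ i, v (P (k, i)).1 = c := by
    intro i
    by_contra hne
    apply hk
    refine Finset.mem_image.2 ⟨(k, i), ?_, rfl⟩
    rw [hV, Finset.mem_map_equiv, Equiv.symm_symm, hW, Finset.mem_product]
    simp [hS, hne]
  have h3 := hP k
  simp only [h2, Finset.sum_const, Finset.card_univ, Fintype.card_fin, nsmul_eq_mul] at h3
  rcases mul_eq_zero.1 h3 with h4 | h4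
  · rw [ZMod.natCast_eq_zero_iff] at h4
    have := Nat.gcd_eq_left h4
    rw [hpd] at this
    exact (Fact.out : p.Prime).one_lt.ne this
  · exact hc h4

lemma card_off (k : ℕ) : (univ.filter (fun v : Fin n → ZMod p => off v 0 = k)).card ≤ n.choose k * p ^ k := by
  classical
  have hsub : (univ.filter (fun v : Fin n → ZMod p => off v 0 = k)) ⊆
      ((univ : Finset (Fin n)).powersetCard k).biUnion (fun S =>
        Fintype.piFinset (fun i => if i ∈ S then (univ : Finset (ZMod p)) else {0})) := by
    intro v hv
    simp only [Finset.mem_filter, Finset.mem_univ, true_and] at hv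
    simp only [Finset.mem_biUnion, Finset.mem_powersetCard]
    refine ⟨univ.filter (fun k => v k ≠ 0), ⟨Finset.subset_univ _, hv⟩, ?_⟩
    rw [Fintype.mem_piFinset]
    intro i
    by_cases h : v i = 0 <;> simp [h]
  refine (Finset.card_le_card hsub).trans (Finset.card_biUnion_le.trans ?_)
  rw [Finset.sum_congr rfl (g := fun _ => p ^ k)]
  · simp
  · intro S hS
    rw [Finset.mem_powersetCard] at hS
    rw [Fintype.card_piFinset]
    have : ∀ i, (if i ∈ S then (univ : Finset (ZMod p)) else {0}).card = if i ∈ S then p else 1 := by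
      intro i; split_ifs <;> simp [ZMod.card]
    simp only [this]
    rw [Finset.prod_ite]; simp [hS.2]

end Part5


section Part6

lemma choose_mul_pow_le (n k : ℕ) (hn : 0 < n) : (n.choose k : ℝ) * ((k : ℝ) / n) ^ k ≤ Real.exp k := by
  have hn' : (0 : ℝ) < n := by exact_mod_cast hn
  have h1 : (n.choose k : ℝ) ≤ (n : ℝ) ^ k / k.factorial := Nat.choose_le_pow_div k n
  have h2 := Real.pow_div_factorial_le_exp (k : ℝ) (by positivity) k
  refine le_trans (mul_le_mul_of_nonneg_right h1 (by positivity)) (le_trans (le_of_eq ?_) h2)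
  rw [div_pow]; field_simp

/-- constant -/
noncomputable def C1 (d : ℕ) : ℝ := d * Real.exp (d + 1)

/-- constant -/
noncomputable def Cc (d : ℕ) : ℝ := 4 * C1 d ^ 2 * d

lemma C1_pos {d : ℕ} (hd : 3 ≤ d) : 0 < C1 d := by
  have : (0 : ℝ) < d := by exact_mod_cast (by omega : 0 < d)
  unfold C1; positivity

lemma Cc_pos {d : ℕ} (hd : 3 ≤ d) : 0 < Cc d := by
  have : (0 : ℝ) < d := by exact_mod_cast (by omega : 0 < d)
  have := C1_pos hd
  unfold Cc; positivity

lemma C1_ge {d : ℕ} (hd : 3 ≤ d) : 15 ≤ C1 d := by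
  have h : (3 : ℝ) ≤ d := by exact_mod_cast hd
  have := Real.add_one_le_exp ((d : ℝ) + 1)
  unfold C1
  nlinarith

lemma Cc_ge {d : ℕ} (hd : 3 ≤ d) : 900 * d ≤ Cc d := by
  have h : (3 : ℝ) ≤ d := by exact_mod_cast hd
  have h1 := C1_ge hd
  unfold Cc
  have : (225 : ℝ) ≤ C1 d ^ 2 := by nlinarith
  nlinarith

lemma Cc_mul_ge {d : ℕ} (hd : 3 ≤ d) (p : ℝ) (hp : 1 ≤ p) : 900 * d ≤ Cc d * p ^ 2 :=
  le_trans (Cc_ge hd) (le_mul_of_one_le_right (Cc_pos hd).le (one_le_pow₀ hp))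

lemma term_bound (n d p k : ℕ) (hd : 3 ≤ d) (hn : 0 < n) (hk : d * k ≤ n) :
    (n.choose k * p ^ k : ℝ) * ((n.choose (d * k / 2) : ℝ) * (((d * k / 2 : ℕ) : ℝ) / n) ^ (d * k))
      ≤ (C1 d * p * √(d * k / n)) ^ k := by
  have hn' : (0 : ℝ) < n := by exact_mod_cast hn
  set m := d * k / 2 with hm
  set r := √((d : ℝ) * k / n) with hr
  have hr0 : 0 ≤ r := Real.sqrt_nonneg _
  have hr2 : r ^ 2 = (d : ℝ) * k / n := Real.sq_sqrt (by positivity)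
  have hr1 : r ≤ 1 := by
    rw [hr, Real.sqrt_le_left (by norm_num), one_pow, div_le_one hn']; exact_mod_cast hk
  have hmk : m ≤ d * k := Nat.div_le_self _ _
  have h3k : 3 * k ≤ d * k := Nat.mul_le_mul_right _ hd
  have hmr : (m : ℝ) / n ≤ r ^ 2 := by
    rw [hr2]; gcongr; exact_mod_cast hmk
  have h1 : (n.choose m : ℝ) * ((m : ℝ) / n) ^ (d * k) ≤ Real.exp (d * k) * r ^ (3 * k) := by
    have e : d * k = m + (d * k - m) := by omega
    calc (n.choose m : ℝ) * ((m : ℝ) / n) ^ (d * k)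
        = ((n.choose m : ℝ) * ((m : ℝ) / n) ^ m) * ((m : ℝ) / n) ^ (d * k - m) := by
          rw [mul_assoc, ← pow_add, ← e]
      _ ≤ Real.exp m * (r ^ 2) ^ (d * k - m) :=
          mul_le_mul (choose_mul_pow_le n m hn) (pow_le_pow_left₀ (by positivity) hmr _) (by positivity)
            (by positivity)
      _ ≤ Real.exp (d * k) * r ^ (3 * k) := by
          refine mul_le_mul (Real.exp_le_exp.2 (by exact_mod_cast hmk)) ?_ (by positivity) (by positivity)
          rw [← pow_mul]
          exact pow_le_pow_of_le_one hr0 hr1 (by omega)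
  have h2 := choose_mul_pow_le n k hn
  calc (n.choose k * p ^ k : ℝ) * ((n.choose m : ℝ) * ((m : ℝ) / n) ^ (d * k))
      ≤ (n.choose k * p ^ k : ℝ) * (Real.exp (d * k) * r ^ (3 * k)) := by gcongr
    _ = ((n.choose k : ℝ) * ((k : ℝ) / n) ^ k) * (p ^ k * Real.exp (d * k) * d ^ k * r ^ k) := by
        have : r ^ (3 * k) = r ^ k * (d ^ k * ((k : ℝ) / n) ^ k) := by
          rw [← mul_pow, ← mul_pow, pow_mul]
          congr 1
          rw [pow_succ, hr2]; ring
        rw [this]; ring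
    _ ≤ Real.exp k * (p ^ k * Real.exp (d * k) * d ^ k * r ^ k) := by gcongr
    _ = _ := by
        unfold C1
        rw [mul_pow, mul_pow, mul_pow, ← Real.exp_nat_mul]
        have : Real.exp (k * ((d : ℝ) + 1)) = Real.exp k * Real.exp (d * k) := by
          rw [← Real.exp_add]; ring_nf
        rw [this]; ring

lemma sum_arith_geom (K : ℕ) : ∑ k ∈ range K, ((k : ℝ) + 1) * (1 / 2) ^ k ≤ 4 := by
  have : ∑ k ∈ range K, ((k : ℝ) + 1) * (1 / 2) ^ k = 4 - 2 * (K + 2) * (1 / 2) ^ K := by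
    induction K with
    | zero => norm_num
    | succ K ih => rw [Finset.sum_range_succ, ih]; push_cast; ring
  rw [this]
  have : (0 : ℝ) ≤ 2 * (K + 2) * (1 / 2) ^ K := by positivity
  linarith

lemma term_bound2 (n d p k : ℕ) (hp : 0 < p) (hd : 3 ≤ d) (hn : 0 < n)
    (hk : (k + 1 : ℝ) * (Cc d * p ^ 2) ≤ n) :
    (C1 d * p * √(d * (k + 1) / n)) ^ (k + 1) ≤ C1 d * p * √(d / n) * ((k + 1) * (1 / 2) ^ k) := by
  have hn' : (0 : ℝ) < n := by exact_mod_cast hn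
  have hp' : (0 : ℝ) < p := by exact_mod_cast hp
  have hC := C1_pos hd
  set x := C1 d * p * √(d * (k + 1) / n) with hx
  have hx0 : 0 ≤ x := by positivity
  have hx2 : x ≤ 1 / 2 := by
    apply le_of_sq_le_sq _ (by norm_num)
    rw [hx, mul_pow, Real.sq_sqrt (by positivity)]
    have : (C1 d * p) ^ 2 * (d * (k + 1) / n) = ((k + 1 : ℝ) * (Cc d * p ^ 2)) / n / 4 := by
      unfold Cc; ring
    rw [this]
    have := (div_le_one hn').2 hk
    linarith
  have hx3 : x ≤ C1 d * p * √(d / n) * (k + 1) := by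
    rw [hx]
    have : (d : ℝ) * (k + 1) / n = d / n * (k + 1) := by ring
    rw [this, Real.sqrt_mul (by positivity)]
    have h1 : √((k : ℝ) + 1) ≤ k + 1 := by
      rw [Real.sqrt_le_left (by positivity)]; nlinarith [(Nat.cast_nonneg k : (0 : ℝ) ≤ k)]
    calc C1 d * p * (√(d / n) * √((k : ℝ) + 1)) = C1 d * p * √(d / n) * √((k : ℝ) + 1) := by ring
      _ ≤ _ := by gcongr
  rw [pow_succ]
  calc x ^ k * x ≤ (1 / 2) ^ k * (C1 d * p * √(d / n) * (k + 1)) := by gcongr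
    _ = _ := by ring

variable {n d p : ℕ} [Fact p.Prime]

open Classical in
/-- structured vectors -/
noncomputable def Bset (n d p : ℕ) [Fact p.Prime] : Finset (Fin n → ZMod p) :=
  univ.filter (fun v => ∃ c, (off v c : ℝ) * (Cc d * p ^ 2) ≤ n)

lemma zero_mem_Bset : (0 : Fin n → ZMod p) ∈ Bset n d p := by
  simp only [Bset, Finset.mem_filter, Finset.mem_univ, true_and]
  refine ⟨0, ?_⟩
  simp [off]

lemma off_small (hd : 3 ≤ d) (hn : 0 < n) (v : Fin n → ZMod p) (c : ZMod p)
    (h : (off v c : ℝ) * (Cc d * p ^ 2) ≤ n) : d * off v c < n := by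
  have hn' : (0 : ℝ) < n := by exact_mod_cast hn
  have hd' : (3 : ℝ) ≤ d := by exact_mod_cast hd
  have hp' : (1 : ℝ) ≤ p := by exact_mod_cast (Fact.out : p.Prime).one_lt.le
  have hC := Cc_ge hd
  have h1 : (900 * d : ℝ) ≤ Cc d * p ^ 2 := Cc_mul_ge hd _ hp'
  have h2 : (off v c : ℝ) * (900 * d) ≤ n := le_trans (mul_le_mul_of_nonneg_left h1 (by positivity)) h
  have : (d : ℝ) * off v c < n := by
    have : (0 : ℝ) ≤ d * off v c := by positivity
    nlinarith
  exact_mod_cast this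

lemma sparse_sum (hd : 3 ≤ d) (hn : 0 < n) (hpd : Nat.gcd p d = 1) :
    ∑ v ∈ (Bset n d p).erase 0, nullProb d v ≤ 4 * (C1 d * p * √(d / n)) := by
  classical
  have hpp : 0 < p := (Fact.out : p.Prime).pos
  have hC := C1_pos hd
  set bnd : ℕ → ℝ := fun k => (n.choose (d * k / 2) : ℝ) * (((d * k / 2 : ℕ) : ℝ) / n) ^ (d * k) with hbnd
  set g : ℕ → ℝ := fun k => if 1 ≤ k ∧ (k : ℝ) * (Cc d * p ^ 2) ≤ n then bnd k else 0 with hg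
  have hg0 : ∀ k, 0 ≤ g k := by
    intro k; simp only [hg, hbnd]; split_ifs <;> positivity
  have h1 : ∀ v ∈ (Bset n d p).erase 0, nullProb d v ≤ g (off v 0) := by
    intro v hv
    rw [Finset.mem_erase] at hv
    obtain ⟨hv0, hv⟩ := hv
    simp only [Bset, Finset.mem_filter, Finset.mem_univ, true_and] at hv
    obtain ⟨c, hc⟩ := hv
    by_cases hc0 : c = 0
    · subst hc0
      have hpos : 1 ≤ off v 0 := by
        by_contra hlt
        apply hv0
        have : off v 0 = 0 := by omega
        unfold off at this
        rw [Finset.card_eq_zero, Finset.filter_eq_empty_iff] at this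
        funext k
        simpa using this (Finset.mem_univ k)
      simp only [hg, if_pos (And.intro hpos hc)]
      exact nullProb_sparse (by omega) hn v (off_small hd hn v 0 hc).le
    · rw [nullProb_eq_zero v c hc0 hpd (off_small hd hn v c hc)]
      exact hg0 _
  have hofn : ∀ v ∈ (univ : Finset (Fin n → ZMod p)), off v 0 ∈ range (n + 1) := by
    intro v _
    rw [Finset.mem_range, Nat.lt_succ_iff]
    exact (Finset.card_le_univ _).trans (by simp)
  calc ∑ v ∈ (Bset n d p).erase 0, nullProb d v ≤ ∑ v ∈ (Bset n d p).erase 0, g (off v 0) := Finset.sum_le_sum h1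
    _ ≤ ∑ v : Fin n → ZMod p, g (off v 0) :=
        Finset.sum_le_sum_of_subset_of_nonneg (Finset.subset_univ _) fun _ _ _ => hg0 _
    _ = ∑ k ∈ range (n + 1), ∑ v ∈ univ.filter (fun v : Fin n → ZMod p => off v 0 = k), g (off v 0) :=
        (Finset.sum_fiberwise_of_maps_to hofn _).symm
    _ = ∑ k ∈ range (n + 1), ((univ.filter (fun v : Fin n → ZMod p => off v 0 = k)).card : ℝ) * g k := by
        refine Finset.sum_congr rfl fun k _ => ?_
        rw [Finset.sum_congr rfl (g := fun _ => g k)]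
        · simp
        · intro v hv; simp only [Finset.mem_filter] at hv; rw [hv.2]
    _ ≤ ∑ k ∈ range (n + 1), (n.choose k * p ^ k : ℝ) * g k := by
        refine Finset.sum_le_sum fun k _ => mul_le_mul_of_nonneg_right ?_ (hg0 k)
        exact_mod_cast card_off k
    _ = ∑ k ∈ range n, (n.choose (k + 1) * p ^ (k + 1) : ℝ) * g (k + 1) := by
        rw [Finset.sum_range_succ']; simp [hg]
    _ ≤ ∑ k ∈ range n, C1 d * p * √(d / n) * (((k : ℝ) + 1) * (1 / 2) ^ k) := by
        refine Finset.sum_le_sum fun k _ => ?_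
        by_cases hk : ((k + 1 : ℕ) : ℝ) * (Cc d * p ^ 2) ≤ n
        · simp only [hg, if_pos (And.intro (Nat.le_add_left 1 k) hk)]
          have hdk : d * (k + 1) ≤ n := by
            have h1 : (900 * d : ℝ) ≤ Cc d * p ^ 2 := by
              have hp' : (1 : ℝ) ≤ p := by exact_mod_cast hpp
              exact Cc_mul_ge hd _ hp'
            have h2 : ((k + 1 : ℕ) : ℝ) * (900 * d) ≤ n := le_trans (mul_le_mul_of_nonneg_left h1 (by positivity)) hk
            have : (d : ℝ) * ((k + 1 : ℕ) : ℝ) ≤ n := by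
              have : (0 : ℝ) ≤ d * ((k + 1 : ℕ) : ℝ) := by positivity
              nlinarith
            exact_mod_cast this
          refine (term_bound n d p (k + 1) hd hn hdk).trans ?_
          push_cast at hk ⊢
          exact term_bound2 n d p k hpp hd hn hk
        · simp only [hg]
          rw [if_neg (fun h => hk h.2), mul_zero]; positivity
    _ ≤ _ := by
        rw [← Finset.mul_sum, mul_comm 4]
        exact mul_le_mul_of_nonneg_left (sum_arith_geom n) (by positivity)

end Part6


section Part7
variable {n d p : ℕ} [Fact p.Prime]

lemma off_add (v : Fin n → ZMod p) (c : ZMod p) :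
    ((univ.filter (fun k => v k ∈ ({c} : Finset (ZMod p)))).card : ℝ) + off v c = n := by
  have := Finset.card_filter_add_card_filter_not (s := (univ : Finset (Fin n)))
    (fun k => v k ∈ ({c} : Finset (ZMod p)))
  rw [Finset.card_univ, Fintype.card_fin] at this
  have h : off v c = (univ.filter (fun k => ¬ v k ∈ ({c} : Finset (ZMod p)))).card := by
    unfold off; simp
  rw [h]; exact_mod_cast this

open Classical in
lemma card_off_le (μ a : ℝ) (hμ : 1 ≤ μ) :
    ((univ.filter (fun v : Fin n → ZMod p => ∃ c, (off v c : ℝ) ≤ a)).card : ℝ)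
      ≤ p * ((1 + p / μ) ^ n * μ ^ a) := by
  have hμ0 : 0 < μ := by linarith
  have hsub : (univ.filter (fun v : Fin n → ZMod p => ∃ c, (off v c : ℝ) ≤ a)) ⊆
      (univ : Finset (ZMod p)).biUnion (fun c => univ.filter (fun v : Fin n → ZMod p =>
        (n : ℝ) - a ≤ ((univ.filter (fun k => v k ∈ ({c} : Finset (ZMod p)))).card : ℝ))) := by
    intro v hv
    simp only [Finset.mem_filter, Finset.mem_univ, true_and] at hv
    obtain ⟨c, hc⟩ := hv
    rw [Finset.mem_biUnion]
    refine ⟨c, Finset.mem_univ _, ?_⟩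
    rw [Finset.mem_filter]
    refine ⟨Finset.mem_univ _, ?_⟩
    linarith [off_add v c]
  have h1 : ∀ c ∈ (univ : Finset (ZMod p)), ((univ.filter (fun v : Fin n → ZMod p =>
        (n : ℝ) - a ≤ ((univ.filter (fun k => v k ∈ ({c} : Finset (ZMod p)))).card : ℝ))).card : ℝ)
        ≤ (1 + p / μ) ^ n * μ ^ a := by
    intro c _
    have := card_count (n := n) ({c} : Finset (ZMod p)) μ ((n : ℝ) - a) hμ
    rw [Finset.card_singleton, Nat.cast_one, mul_one, ← le_div_iff₀ (by positivity)] at this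
    refine le_trans this (le_of_eq ?_)
    rw [Real.rpow_sub hμ0, Real.rpow_natCast, div_div_eq_mul_div]
    have : (μ + p) = μ * (1 + p / μ) := by field_simp
    rw [this, mul_pow]
    field_simp
  calc _ ≤ (((univ : Finset (ZMod p)).biUnion (fun c => univ.filter (fun v : Fin n → ZMod p =>
        (n : ℝ) - a ≤ ((univ.filter (fun k => v k ∈ ({c} : Finset (ZMod p)))).card : ℝ)))).card : ℝ) := by
        exact_mod_cast Finset.card_le_card hsub
    _ ≤ ∑ c : ZMod p, ((univ.filter (fun v : Fin n → ZMod p =>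
        (n : ℝ) - a ≤ ((univ.filter (fun k => v k ∈ ({c} : Finset (ZMod p)))).card : ℝ))).card : ℝ) := by
        exact_mod_cast Finset.card_biUnion_le
    _ ≤ ∑ c : ZMod p, (1 + p / μ) ^ n * μ ^ a := Finset.sum_le_sum h1
    _ = _ := by simp [ZMod.card]

lemma card_Bset (hd : 3 ≤ d) : ((Bset n d p).card : ℝ) ≤ p * (6 / 5) ^ n := by
  classical
  have hp2 : (2 : ℝ) ≤ p := by exact_mod_cast (Fact.out : p.Prime).two_le
  have hp0 : (0 : ℝ) < p := by linarith
  have hC := Cc_pos hd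
  have hC2 : 2700 ≤ Cc d := by
    have := Cc_ge hd
    have h : (3 : ℝ) ≤ d := by exact_mod_cast hd
    linarith
  have hB : Bset n d p = univ.filter (fun v : Fin n → ZMod p => ∃ c, (off v c : ℝ) ≤ n / (Cc d * p ^ 2)) := by
    unfold Bset
    ext v
    simp only [Finset.mem_filter, Finset.mem_univ, true_and]
    refine exists_congr fun c => ?_
    rw [le_div_iff₀ (by positivity)]
  rw [hB]
  refine (card_off_le (8 * p) _ (by linarith)).trans ?_
  refine mul_le_mul_of_nonneg_left ?_ hp0.le
  have h1 : (8 * (p : ℝ)) ^ ((n : ℝ) / (Cc d * p ^ 2)) ≤ (300 / 299) ^ n := by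
    have hx : (300 / 299 : ℝ) ^ n ≥ Real.exp (1 / 300) ^ n := by
      refine pow_le_pow_left₀ (by positivity) ?_ n
      have := Real.exp_bound_div_one_sub_of_interval (x := 1 / 300) (by norm_num) (by norm_num)
      norm_num at this ⊢
      linarith
    refine le_trans ?_ hx
    rw [Real.rpow_def_of_pos (by positivity), ← Real.exp_nat_mul]
    refine Real.exp_le_exp.2 ?_
    have hl : Real.log (8 * p) ≤ 8 * p := (Real.log_le_sub_one_of_pos (by positivity)).trans (by linarith)
    calc Real.log (8 * p) * ((n : ℝ) / (Cc d * p ^ 2)) ≤ (8 * p) * ((n : ℝ) / (Cc d * p ^ 2)) := by gcongr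
      _ = n * (8 / (Cc d * p)) := by field_simp
      _ ≤ n * (1 / 300) := by
          refine mul_le_mul_of_nonneg_left ?_ (by positivity)
          rw [div_le_div_iff₀ (by positivity) (by norm_num)]
          nlinarith
  have h2 : (1 + (p : ℝ) / (8 * p)) = 9 / 8 := by field_simp; norm_num
  rw [h2]
  calc (9 / 8 : ℝ) ^ n * (8 * (p : ℝ)) ^ ((n : ℝ) / (Cc d * p ^ 2)) ≤ (9 / 8 : ℝ) ^ n * (300 / 299) ^ n := by gcongr
    _ = (9 / 8 * (300 / 299)) ^ n := by rw [mul_pow]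
    _ ≤ _ := pow_le_pow_left₀ (by norm_num) (by norm_num) n

open Classical in
/-- nearly constant vectors -/
noncomputable def E1 (n p : ℕ) [Fact p.Prime] : Finset (Fin n → ZMod p) :=
  univ.filter (fun v => ∃ c, (off v c : ℝ) ≤ n / Real.log n)

lemma card_E1 (hn : 3 ≤ n) (hpn : p ≤ n) : ((E1 n p).card : ℝ) ≤ p * 6 ^ n := by
  have hp2 : (2 : ℝ) ≤ p := by exact_mod_cast (Fact.out : p.Prime).two_le
  have hp0 : (0 : ℝ) < p := by linarith
  have hlog : 0 < Real.log n := Real.log_pos (by exact_mod_cast (by omega : 1 < n))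
  unfold E1
  refine (card_off_le (p : ℝ) _ (by linarith)).trans ?_
  refine mul_le_mul_of_nonneg_left ?_ hp0.le
  have h1 : (p : ℝ) ^ ((n : ℝ) / Real.log n) ≤ 3 ^ n := by
    have hx : (3 : ℝ) ^ n ≥ Real.exp 1 ^ n :=
      pow_le_pow_left₀ (by positivity) (by have := Real.exp_one_lt_d9; linarith) n
    refine le_trans ?_ hx
    rw [Real.rpow_def_of_pos (by positivity), ← Real.exp_nat_mul]
    refine Real.exp_le_exp.2 ?_
    have hl : Real.log p ≤ Real.log n := Real.log_le_log hp0 (by exact_mod_cast hpn)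
    calc Real.log p * (n / Real.log n) ≤ Real.log n * (n / Real.log n) := by gcongr
      _ = n * 1 := by field_simp
  rw [div_self hp0.ne']
  calc (1 + 1 : ℝ) ^ n * (p : ℝ) ^ ((n : ℝ) / Real.log n) ≤ (1 + 1) ^ n * 3 ^ n := by gcongr
    _ = 6 ^ n := by rw [← mul_pow]; norm_num

open Classical in
/-- vectors concentrated near a progression -/
noncomputable def E2 (n p : ℕ) [Fact p.Prime] : Finset (Fin n → ZMod p) :=
  univ.filter (fun w => 2500 ≤ p ∧ ∃ t : ZMod p, t ≠ 0 ∧ ∃ b,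
    (n : ℝ) / 2 ≤ ((univ.filter (fun k => w k ∈ nearSet 2500 t b)).card : ℝ))

lemma card_E2 : ((E2 n p).card : ℝ) ≤ p ^ 2 * (p * (2 / 25)) ^ n := by
  classical
  have hp2 : (2 : ℝ) ≤ p := by exact_mod_cast (Fact.out : p.Prime).two_le
  have hp0 : (0 : ℝ) < p := by linarith
  by_cases hq : 2500 ≤ p
  swap
  · have : E2 n p = ∅ := by
      unfold E2; rw [Finset.filter_eq_empty_iff]; intro w _ h; exact hq h.1
    rw [this]; simp; positivity
  have hsub : E2 n p ⊆ (univ.filter (fun tb : ZMod p × ZMod p => tb.1 ≠ 0)).biUnion (fun tb =>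
      univ.filter (fun w : Fin n → ZMod p =>
        (n : ℝ) / 2 ≤ ((univ.filter (fun k => w k ∈ nearSet 2500 tb.1 tb.2)).card : ℝ))) := by
    intro w hw
    simp only [E2, Finset.mem_filter, Finset.mem_univ, true_and] at hw
    obtain ⟨-, t, ht, b, h⟩ := hw
    rw [Finset.mem_biUnion]
    exact ⟨(t, b), by simpa using ht, by simpa using h⟩
  have h1 : ∀ tb ∈ (univ.filter (fun tb : ZMod p × ZMod p => tb.1 ≠ 0)),
      ((univ.filter (fun w : Fin n → ZMod p =>
        (n : ℝ) / 2 ≤ ((univ.filter (fun k => w k ∈ nearSet 2500 tb.1 tb.2)).card : ℝ))).card : ℝ)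
        ≤ (p * (2 / 25)) ^ n := by
    intro tb htb
    simp only [Finset.mem_filter, Finset.mem_univ, true_and] at htb
    have h2 := card_count (n := n) (nearSet 2500 tb.1 tb.2) 2500 ((n : ℝ) / 2) (by norm_num)
    have h3 := card_nearSet 2500 (by norm_num) hq tb.1 tb.2 htb
    have h4 : (2500 : ℝ) ^ ((n : ℝ) / 2) = 50 ^ n := by
      have : (2500 : ℝ) = 50 ^ (2 : ℝ) := by norm_num
      rw [this, ← Real.rpow_mul (by norm_num), mul_div_cancel₀ _ (by norm_num), Real.rpow_natCast]
    rw [h4, ← le_div_iff₀ (by positivity)] at h2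
    refine h2.trans ?_
    rw [← div_pow]
    refine pow_le_pow_left₀ (by positivity) ?_ n
    push_cast at h3
    linarith
  calc _ ≤ (((univ.filter (fun tb : ZMod p × ZMod p => tb.1 ≠ 0)).biUnion (fun tb =>
      univ.filter (fun w : Fin n → ZMod p =>
        (n : ℝ) / 2 ≤ ((univ.filter (fun k => w k ∈ nearSet 2500 tb.1 tb.2)).card : ℝ)))).card : ℝ) := by
        exact_mod_cast Finset.card_le_card hsub
    _ ≤ ∑ tb ∈ (univ.filter (fun tb : ZMod p × ZMod p => tb.1 ≠ 0)), ((univ.filter (fun w : Fin n → ZMod p =>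
        (n : ℝ) / 2 ≤ ((univ.filter (fun k => w k ∈ nearSet 2500 tb.1 tb.2)).card : ℝ))).card : ℝ) := by
        exact_mod_cast Finset.card_biUnion_le
    _ ≤ ∑ tb ∈ (univ.filter (fun tb : ZMod p × ZMod p => tb.1 ≠ 0)), (p * (2 / 25) : ℝ) ^ n :=
        Finset.sum_le_sum h1
    _ ≤ ∑ tb : ZMod p × ZMod p, (p * (2 / 25) : ℝ) ^ n :=
        Finset.sum_le_sum_of_subset_of_nonneg (Finset.subset_univ _) fun _ _ _ => by positivity
    _ = _ := by simp [ZMod.card, sq]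

/-- constant in the exponent -/
noncomputable def c1 (d : ℕ) : ℝ := 1 / (Cc d ^ 2 * 2500 ^ 4)

lemma disp_final (hd : 3 ≤ d) (hn : 3 ≤ n) (v w : Fin n → ZMod p) (hv : v ∉ Bset n d p) (hw : w ∉ Bset n d p)
    (h12 : ¬ (v ∈ E1 n p ∧ w ∈ E2 n p)) (h21 : ¬ (v ∈ E2 n p ∧ w ∈ E1 n p)) :
    c1 d * n / (p ^ 2 * Real.log n ^ 2) ≤ disp v w / (4 * n ^ 3) := by
  have hp2 : (2 : ℝ) ≤ p := by exact_mod_cast (Fact.out : p.Prime).two_le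
  have hp0 : (0 : ℝ) < p := by linarith
  have hn' : (3 : ℝ) ≤ n := by exact_mod_cast hn
  have hn0 : (0 : ℝ) < n := by linarith
  have hlog1 : 1 ≤ Real.log n := by
    rw [Real.le_log_iff_exp_le hn0]
    have := Real.exp_one_lt_d9; linarith
  have hlog : 0 < Real.log n := by linarith
  have hC := Cc_pos hd
  have hC2 : 1 ≤ Cc d := by
    have := Cc_ge hd
    have h : (3 : ℝ) ≤ d := by exact_mod_cast hd
    linarith
  have hB : ∀ u : Fin n → ZMod p, u ∉ Bset n d p → ∀ c, n / (Cc d * p ^ 2) ≤ (off u c : ℝ) := by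
    intro u hu c
    simp only [Bset, Finset.mem_filter, Finset.mem_univ, true_and, not_exists, not_le] at hu
    rw [div_le_iff₀ (by positivity)]
    exact (hu c).le
  have hs0 : (0 : ℝ) ≤ n / (Cc d * p ^ 2) := by positivity
  -- the case of a nearly constant vector paired with a spread one
  have key : ∀ v w : Fin n → ZMod p, v ∉ Bset n d p → 2500 ≤ p → w ∉ E2 n p →
      c1 d * n / (p ^ 2 * Real.log n ^ 2) ≤ disp v w / (4 * n ^ 3) := by
    intro v w hv hq hw2
    have h2 : ∀ t : ZMod p, t ≠ 0 → ∀ b,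
        ((univ.filter (fun k => w k ∈ nearSet 2500 t b)).card : ℝ) ≤ n / 2 := by
      intro t ht b
      by_contra hcon
      apply hw2
      simp only [E2, Finset.mem_filter, Finset.mem_univ, true_and]
      exact ⟨hq, t, ht, b, (not_le.1 hcon).le⟩
    have h3 := disp_case2 2500 (by norm_num) v w _ hs0 (hB v hv) h2
    rw [le_div_iff₀ (by positivity)]
    refine le_trans ?_ h3
    have e1 : n * (n / (Cc d * p ^ 2) * (n * (n / 2 * (8 / ((2500 : ℕ) : ℝ) ^ 2))))
        = 1 / (Cc d * 2500 ^ 2) * (n / p ^ 2) * (4 * n ^ 3) := by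
      push_cast; field_simp; ring
    rw [e1]
    refine mul_le_mul_of_nonneg_right ?_ (by positivity)
    have e2 : c1 d * n / (p ^ 2 * Real.log n ^ 2) = c1 d * (n / p ^ 2) / Real.log n ^ 2 := by
      field_simp
    rw [e2]
    have hc1 : 0 ≤ c1 d := by unfold c1; positivity
    refine (div_le_self (by positivity) (one_le_pow₀ hlog1)).trans ?_
    refine mul_le_mul_of_nonneg_right ?_ (by positivity)
    unfold c1
    refine one_div_le_one_div_of_le (by positivity) ?_
    nlinarith
  by_cases hq : 2500 ≤ p
  · by_cases hv1 : v ∈ E1 n p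
    · exact key v w hv hq (fun h => h12 ⟨hv1, h⟩)
    by_cases hw1 : w ∈ E1 n p
    · rw [disp_symm]; exact key w v hw hq (fun h => h21 ⟨h, hw1⟩)
    have hE : ∀ u : Fin n → ZMod p, u ∉ E1 n p → ∀ c, n / Real.log n ≤ (off u c : ℝ) := by
      intro u hu c
      simp only [E1, Finset.mem_filter, Finset.mem_univ, true_and, not_exists, not_le] at hu
      exact (hu c).le
    have h3 := disp_case1 v w _ _ (by positivity) (hE v hv1) (hE w hw1)
    rw [le_div_iff₀ (by positivity)]
    refine le_trans ?_ h3
    have e1 : n * (n / Real.log n * (n * (n / Real.log n * (8 / (p : ℝ) ^ 2))))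
        = 2 * n / (p ^ 2 * Real.log n ^ 2) * (4 * n ^ 3) := by
      field_simp; ring
    rw [e1]
    have hc1 : c1 d ≤ 2 := by
      unfold c1
      rw [div_le_iff₀ (by positivity)]
      nlinarith
    gcongr
  · have h3 := disp_case1 v w _ _ hs0 (hB v hv) (hB w hw)
    rw [le_div_iff₀ (by positivity)]
    refine le_trans ?_ h3
    have e1 : n * (n / (Cc d * p ^ 2) * (n * (n / (Cc d * p ^ 2) * (8 / (p : ℝ) ^ 2))))
        = 2 / (Cc d ^ 2 * p ^ 4) * (n / p ^ 2) * (4 * n ^ 3) := by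
      field_simp; ring
    rw [e1]
    refine mul_le_mul_of_nonneg_right ?_ (by positivity)
    have e2 : c1 d * n / (p ^ 2 * Real.log n ^ 2) = c1 d * (n / p ^ 2) / Real.log n ^ 2 := by
      field_simp
    rw [e2]
    have hc1 : 0 ≤ c1 d := by unfold c1; positivity
    refine (div_le_self (by positivity) (one_le_pow₀ hlog1)).trans ?_
    refine mul_le_mul_of_nonneg_right ?_ (by positivity)
    unfold c1
    have hp3 : (p : ℝ) ≤ 2500 := by exact_mod_cast (by omega : p ≤ 2500)
    calc 1 / (Cc d ^ 2 * 2500 ^ 4) ≤ 1 / (Cc d ^ 2 * p ^ 4) := by gcongr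
      _ ≤ _ := by gcongr; norm_num

lemma bulk_sum (hd : 3 ≤ d) (hn : 3 ≤ n) (hpn : p ≤ n) :
    ((p : ℝ) ^ n)⁻¹ * ∑ v ∈ (Bset n d p)ᶜ, ∑ w ∈ (Bset n d p)ᶜ, ‖chE d v w‖
      ≤ (Real.exp 1 * (n * d + 1)) ^ p * (((n : ℝ) + 1) ^ p) ^ 2
          * Real.exp (-(c1 d * n / (p ^ 2 * Real.log n ^ 2)))
        + 2 * p ^ 3 * (1 / 2) ^ n := by
  classical
  have hp2 : (2 : ℝ) ≤ p := by exact_mod_cast (Fact.out : p.Prime).two_le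
  have hp0 : (0 : ℝ) < p := by linarith
  set L : ℝ := (Real.exp 1 * (n * d + 1)) ^ p with hL
  have hL0 : 0 < L := by positivity
  set D : ℝ := c1 d * n / (p ^ 2 * Real.log n ^ 2) with hD
  set e1 : (Fin n → ZMod p) → ℝ := fun v => if v ∈ E1 n p then 1 else 0 with he1
  set e2 : (Fin n → ZMod p) → ℝ := fun v => if v ∈ E2 n p then 1 else 0 with he2
  have he1n : ∀ v, 0 ≤ e1 v := by intro v; simp only [he1]; split_ifs <;> norm_num
  have he2n : ∀ v, 0 ≤ e2 v := by intro v; simp only [he2]; split_ifs <;> norm_num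
  have hq : ∀ v : Fin n → ZMod p, 0 < qw v := qw_pos
  have pair : ∀ v ∈ (Bset n d p)ᶜ, ∀ w ∈ (Bset n d p)ᶜ, ‖chE d v w‖ ≤
      L * Real.exp (-D) * (p : ℝ) ^ n * (qw v * qw w) + (e1 v * e2 w + e2 v * e1 w) := by
    intro v hv w hw
    rw [Finset.mem_compl] at hv hw
    have hpos : 0 ≤ L * Real.exp (-D) * (p : ℝ) ^ n * (qw v * qw w) := by
      have := hq v; have := hq w; positivity
    have hn1 : 0 ≤ e1 v * e2 w := mul_nonneg (he1n _) (he2n _)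
    have hn2 : 0 ≤ e2 v * e1 w := mul_nonneg (he2n _) (he1n _)
    by_cases h12 : v ∈ E1 n p ∧ w ∈ E2 n p
    · have : e1 v * e2 w = 1 := by simp [he1, he2, h12.1, h12.2]
      linarith [norm_chE_le_one (d := d) v w]
    by_cases h21 : v ∈ E2 n p ∧ w ∈ E1 n p
    · have : e2 v * e1 w = 1 := by simp [he1, he2, h21.1, h21.2]
      linarith [norm_chE_le_one (d := d) v w]
    have h := disp_final hd hn v w hv hw h12 h21
    have hk := chE_key (by omega : 0 < n) hd v w
    have hexp : Real.exp (-(disp v w / (4 * n ^ 3))) ≤ Real.exp (-D) := Real.exp_le_exp.2 (by linarith)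
    have : ‖chE d v w‖ ≤ L * (Real.exp (-D) * (qw v * qw w * (p : ℝ) ^ n)) := by
      refine hk.trans ?_
      have := hq v; have := hq w
      gcongr
    calc _ ≤ _ := this
      _ = L * Real.exp (-D) * (p : ℝ) ^ n * (qw v * qw w) := by ring
      _ ≤ _ := by linarith
  have hfn : ∀ v w, 0 ≤ L * Real.exp (-D) * (p : ℝ) ^ n * (qw v * qw w) + (e1 v * e2 w + e2 v * e1 w) := by
    intro v w
    have := hq v; have := hq w
    have hn1 : 0 ≤ e1 v * e2 w := mul_nonneg (he1n _) (he2n _)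
    have hn2 : 0 ≤ e2 v * e1 w := mul_nonneg (he2n _) (he1n _)
    positivity
  have hs1 : ∑ v, e1 v = (E1 n p).card := by simp [he1]
  have hs2 : ∑ v, e2 v = (E2 n p).card := by simp [he2]
  have hsum : ∑ v ∈ (Bset n d p)ᶜ, ∑ w ∈ (Bset n d p)ᶜ, ‖chE d v w‖
      ≤ L * Real.exp (-D) * (p : ℝ) ^ n * ((∑ v : Fin n → ZMod p, qw v) * (∑ v : Fin n → ZMod p, qw v))
        + 2 * ((E1 n p).card * (E2 n p).card : ℝ) := by
    calc _ ≤ ∑ v ∈ (Bset n d p)ᶜ, ∑ w ∈ (Bset n d p)ᶜ,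
          (L * Real.exp (-D) * (p : ℝ) ^ n * (qw v * qw w) + (e1 v * e2 w + e2 v * e1 w)) :=
          Finset.sum_le_sum fun v hv => Finset.sum_le_sum fun w hw => pair v hv w hw
      _ ≤ ∑ v, ∑ w, (L * Real.exp (-D) * (p : ℝ) ^ n * (qw v * qw w) + (e1 v * e2 w + e2 v * e1 w)) := by
          refine (Finset.sum_le_sum fun v _ => Finset.sum_le_sum_of_subset_of_nonneg
            (Finset.subset_univ _) fun w _ _ => hfn v w).trans ?_
          exact Finset.sum_le_sum_of_subset_of_nonneg (Finset.subset_univ _)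
            fun v _ _ => Finset.sum_nonneg fun w _ => hfn v w
      _ = _ := by
          simp only [Finset.sum_add_distrib, ← Finset.mul_sum, ← Finset.sum_mul, hs1, hs2]
          ring
  have hqs := sum_qw_le (n := n) (p := p)
  have hqs0 : 0 ≤ ∑ v : Fin n → ZMod p, qw v := Finset.sum_nonneg fun v _ => (hq v).le
  have hE1 := card_E1 (p := p) hn hpn
  have hE2 := card_E2 (n := n) (p := p)
  have hpn0 : (0 : ℝ) < (p : ℝ) ^ n := by positivity
  rw [inv_mul_le_iff₀ hpn0]
  refine hsum.trans ?_
  have h1 : (∑ v : Fin n → ZMod p, qw v) * (∑ v : Fin n → ZMod p, qw v) ≤ (((n : ℝ) + 1) ^ p) ^ 2 := by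
    rw [sq]; exact mul_le_mul hqs hqs hqs0 (by positivity)
  have h2 : ((E1 n p).card * (E2 n p).card : ℝ) ≤ (p : ℝ) ^ n * (p ^ 3 * (1 / 2) ^ n) := by
    calc ((E1 n p).card * (E2 n p).card : ℝ) ≤ (p * 6 ^ n) * (p ^ 2 * (p * (2 / 25)) ^ n) :=
          mul_le_mul hE1 hE2 (by positivity) (by positivity)
      _ = (p : ℝ) ^ n * (p ^ 3 * (6 * (2 / 25)) ^ n) := by rw [mul_pow, mul_pow]; ring
      _ ≤ _ := by gcongr; norm_num
  have h3 : L * Real.exp (-D) * (p : ℝ) ^ n * ((∑ v : Fin n → ZMod p, qw v) * (∑ v : Fin n → ZMod p, qw v))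
      ≤ L * Real.exp (-D) * (p : ℝ) ^ n * (((n : ℝ) + 1) ^ p) ^ 2 := by gcongr
  calc _ ≤ L * Real.exp (-D) * (p : ℝ) ^ n * (((n : ℝ) + 1) ^ p) ^ 2
        + 2 * ((p : ℝ) ^ n * (p ^ 3 * (1 / 2) ^ n)) := by linarith
    _ = _ := by ring

lemma total_bound (hd : 3 ≤ d) (hn : 3 ≤ n) (hpn : p ≤ n) (hpd : Nat.gcd p d = 1) :
    |(∑ v ∈ univ.filter (fun v : Fin n → ZMod p => v ≠ 0), nullProb d v) - 1|
      ≤ 8 * (C1 d * p * √(d / n)) + p ^ 2 * (3 / 4) ^ n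
        + ((Real.exp 1 * (n * d + 1)) ^ p * (((n : ℝ) + 1) ^ p) ^ 2
          * Real.exp (-(c1 d * n / (p ^ 2 * Real.log n ^ 2))) + 2 * p ^ 3 * (1 / 2) ^ n) := by
  have hp2 : (2 : ℝ) ≤ p := by exact_mod_cast (Fact.out : p.Prime).two_le
  have hp0 : (0 : ℝ) < p := by linarith
  have h0 := main_decomp (d := d) (Bset n d p) zero_mem_Bset
  have h1 := sparse_sum hd (by omega : 0 < n) hpd
  have h2 := bulk_sum hd hn hpn
  have h3 : ((p : ℝ) ^ n)⁻¹ * ((Bset n d p).card : ℝ) ^ 2 ≤ p ^ 2 * (3 / 4) ^ n := by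
    rw [inv_mul_le_iff₀ (by positivity)]
    calc ((Bset n d p).card : ℝ) ^ 2 ≤ (p * (6 / 5) ^ n) ^ 2 :=
          pow_le_pow_left₀ (by positivity) (card_Bset hd) 2
      _ = p ^ 2 * (36 / 25) ^ n := by
          rw [mul_pow, ← pow_mul, mul_comm n 2, pow_mul]; norm_num
      _ ≤ p ^ 2 * (2 * (3 / 4)) ^ n := by gcongr; norm_num
      _ ≤ p ^ 2 * (p * (3 / 4)) ^ n := by gcongr
      _ = _ := by rw [mul_pow]; ring
  linarith

end Part7


section Part8

lemma F3_bound (n d p : ℕ) (hn : 3 ≤ n) (hdn : d + 1 ≤ n) (hp0 : 0 < p) (c : ℝ) (hc : 0 < c)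
    (hp : (p : ℝ) ≤ (n : ℝ) ^ (1 / 4 : ℝ))
    (hlog : 14 * Real.log n ^ 3 ≤ c * (n : ℝ) ^ (1 / 4 : ℝ)) :
    (Real.exp 1 * (n * d + 1)) ^ p * (((n : ℝ) + 1) ^ p) ^ 2 * Real.exp (-(c * n / (p ^ 2 * Real.log n ^ 2)))
      ≤ 1 / n := by
  have hn' : (3 : ℝ) ≤ n := by exact_mod_cast hn
  have hn0 : (0 : ℝ) < n := by linarith
  have hp' : (0 : ℝ) < p := by exact_mod_cast hp0
  have hl1 : 1 ≤ Real.log n := by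
    rw [Real.le_log_iff_exp_le hn0]
    have := Real.exp_one_lt_d9; linarith
  set l := Real.log n with hl
  set x := (n : ℝ) ^ (1 / 4 : ℝ) with hx
  have hx0 : 0 < x := by positivity
  have hx1 : 1 ≤ x := Real.one_le_rpow (by linarith) (by norm_num)
  have hx4 : x ^ 4 = n := by
    rw [hx, ← Real.rpow_natCast, ← Real.rpow_mul hn0.le]; norm_num
  have hel : Real.exp l = n := Real.exp_log hn0
  have h1 : Real.exp 1 * ((n : ℝ) * d + 1) ≤ Real.exp (3 * l) := by
    have e : Real.exp (3 * l) = Real.exp l * n ^ 2 := by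
      rw [← hel, ← Real.exp_nat_mul, ← Real.exp_add]; congr 1; push_cast; ring
    rw [e]
    refine mul_le_mul (Real.exp_le_exp.2 hl1) ?_ (by positivity) (by positivity)
    have : (d : ℝ) + 1 ≤ n := by exact_mod_cast hdn
    nlinarith
  have h2 : (n : ℝ) + 1 ≤ Real.exp (2 * l) := by
    have e : Real.exp (2 * l) = n ^ 2 := by
      rw [← hel, ← Real.exp_nat_mul]; norm_num
    rw [e]; nlinarith
  have h3 : (Real.exp 1 * ((n : ℝ) * d + 1)) ^ p ≤ Real.exp (p * (3 * l)) := by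
    rw [Real.exp_nat_mul]; exact pow_le_pow_left₀ (by positivity) h1 p
  have h4 : (((n : ℝ) + 1) ^ p) ^ 2 ≤ Real.exp (p * (4 * l)) := by
    have e : Real.exp (p * (4 * l)) = (Real.exp (2 * l) ^ p) ^ 2 := by
      rw [← Real.exp_nat_mul, ← Real.exp_nat_mul]; congr 1; push_cast; ring
    rw [e]; gcongr
  have h5 : (1 : ℝ) / n = Real.exp (-l) := by rw [Real.exp_neg, hel, one_div]
  rw [h5]
  calc _ ≤ Real.exp (p * (3 * l)) * Real.exp (p * (4 * l)) * Real.exp (-(c * n / (p ^ 2 * l ^ 2))) := by gcongr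
    _ = Real.exp (7 * (p * l) - c * n / (p ^ 2 * l ^ 2)) := by
        rw [← Real.exp_add, ← Real.exp_add]; congr 1; ring
    _ ≤ Real.exp (-l) := by
        refine Real.exp_le_exp.2 ?_
        have h6 : 14 * (x * l) ≤ c * n / (p ^ 2 * l ^ 2) := by
          rw [le_div_iff₀ (by positivity)]
          calc 14 * (x * l) * (p ^ 2 * l ^ 2) = (14 * l ^ 3) * x * p ^ 2 := by ring
            _ ≤ (c * x) * x * x ^ 2 := by gcongr
            _ = c * n := by rw [← hx4]; ring
        have h7 : (p : ℝ) * l ≤ x * l := by gcongr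
        have h8 : l ≤ x * l := le_mul_of_one_le_left (by linarith) hx1
        linarith

open Filter Topology in
lemma eventually_small (d : ℕ) (hd : 3 ≤ d) (ε : ℝ) (hε : 0 < ε) :
    ∃ N : ℕ, ∀ n : ℕ, N ≤ n → ∀ (p : ℕ), 0 < p → (p : ℝ) ≤ (n : ℝ) ^ (1 / 4 : ℝ) →
      3 ≤ n ∧ p ≤ n ∧ 8 * (C1 d * p * √(d / n)) + p ^ 2 * (3 / 4) ^ n
        + ((Real.exp 1 * (n * d + 1)) ^ p * (((n : ℝ) + 1) ^ p) ^ 2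
          * Real.exp (-(c1 d * n / (p ^ 2 * Real.log n ^ 2))) + 2 * p ^ 3 * (1 / 2) ^ n) ≤ ε := by
  have hC1 := C1_pos hd
  have hcc : 0 < c1 d := by have := Cc_pos hd; unfold c1; positivity
  have cast := tendsto_natCast_atTop_atTop (R := ℝ)
  have t1 : Tendsto (fun n : ℕ => 8 * (C1 d * √d) * (n : ℝ) ^ (-(1 / 4) : ℝ)) atTop (𝓝 0) := by
    have := ((tendsto_rpow_neg_atTop (by norm_num : (0 : ℝ) < 1 / 4)).comp cast).const_mul (8 * (C1 d * √d))
    simpa using this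
  have t2 : Tendsto (fun n : ℕ => (n : ℝ) * (3 / 4) ^ n) atTop (𝓝 0) :=
    tendsto_self_mul_const_pow_of_lt_one (by norm_num) (by norm_num)
  have t3 : Tendsto (fun n : ℕ => 2 * ((n : ℝ) * (1 / 2) ^ n)) atTop (𝓝 0) := by
    have := (tendsto_self_mul_const_pow_of_lt_one (r := 1 / 2) (by norm_num) (by norm_num)).const_mul 2
    simpa using this
  have t4 : Tendsto (fun n : ℕ => 1 / (n : ℝ)) atTop (𝓝 0) := tendsto_one_div_atTop_nhds_zero_nat
  have tl : ∀ᶠ n : ℕ in atTop, 14 * Real.log n ^ 3 ≤ c1 d * (n : ℝ) ^ (1 / 4 : ℝ) := by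
    have h := (isLittleO_log_rpow_rpow_atTop 3 (by norm_num : (0 : ℝ) < 1 / 4)).comp_tendsto cast
    have h2 := h.def (by positivity : 0 < c1 d / 14)
    filter_upwards [h2, eventually_ge_atTop 1] with n hn hn1
    have hlog : 0 ≤ Real.log n := Real.log_natCast_nonneg n
    simp only [Function.comp] at hn
    rw [Real.norm_of_nonneg (by positivity), Real.norm_of_nonneg (by positivity)] at hn
    have e : Real.log n ^ (3 : ℝ) = Real.log n ^ 3 := by norm_cast
    rw [e] at hn
    linarith
  have q := fun {f : ℕ → ℝ} (h : Tendsto f atTop (𝓝 0)) => h.eventually_le_const (by positivity : (0 : ℝ) < ε / 4)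
  have hall := (q t1).and ((q t2).and ((q t3).and ((q t4).and (tl.and (eventually_ge_atTop (d + 3))))))
  obtain ⟨N, hN⟩ := eventually_atTop.1 hall
  refine ⟨N, fun n hn p hp0 hp => ?_⟩
  obtain ⟨s1, s2, s3, s4, s5, s6⟩ := hN n hn
  have hn3 : 3 ≤ n := by omega
  have hn' : (3 : ℝ) ≤ n := by exact_mod_cast hn3
  have hn0 : (0 : ℝ) < n := by linarith
  have hp' : (0 : ℝ) < p := by exact_mod_cast hp0
  set x := (n : ℝ) ^ (1 / 4 : ℝ) with hx
  have hx0 : 0 < x := by positivity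
  have hx1 : 1 ≤ x := Real.one_le_rpow (by linarith) (by norm_num)
  have hx4 : x ^ 4 = n := by
    rw [hx, ← Real.rpow_natCast, ← Real.rpow_mul hn0.le]; norm_num
  have hpw : ∀ k : ℕ, k ≤ 4 → (p : ℝ) ^ k ≤ n := by
    intro k hk
    calc (p : ℝ) ^ k ≤ x ^ k := by gcongr
      _ ≤ x ^ 4 := pow_le_pow_right₀ hx1 hk
      _ = n := hx4
  refine ⟨hn3, ?_, ?_⟩
  · have := hpw 1 (by norm_num)
    rw [pow_one] at this
    exact_mod_cast this
  have b1 : 8 * (C1 d * p * √(d / n)) ≤ 8 * (C1 d * √d) * (n : ℝ) ^ (-(1 / 4) : ℝ) := by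
    have hs : √(n : ℝ) = x ^ 2 := by
      rw [← hx4, show x ^ 4 = (x ^ 2) ^ 2 by ring, Real.sqrt_sq (by positivity)]
    rw [Real.rpow_neg hn0.le, ← hx, Real.sqrt_div (by positivity), hs]
    calc 8 * (C1 d * p * (√d / x ^ 2)) ≤ 8 * (C1 d * x * (√d / x ^ 2)) := by gcongr
      _ = _ := by field_simp
  have b2 : (p : ℝ) ^ 2 * (3 / 4) ^ n ≤ n * (3 / 4) ^ n := by
    have := hpw 2 (by norm_num); gcongr
  have b3 : 2 * (p : ℝ) ^ 3 * (1 / 2) ^ n ≤ 2 * (n * (1 / 2) ^ n) := by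
    have := hpw 3 (by norm_num)
    rw [mul_assoc]; gcongr
  have b4 := F3_bound n d p hn3 (by omega) hp0 (c1 d) hcc hp s5
  linarith

end Part8



/-- For `d ≥ 3` and `α = min {1/4, (d-2)/(2d)}`, for every `ε > 0` there are `c > 0` and `N`
such that for all `n ≥ N` and all primes `p` with `gcd(p,d) = 1` and `p ≤ c n^α`,
`(1/(nd)!) Σ_{v ∈ 𝔽_p^n \ {0}} #{P : A(P) v = 0 over 𝔽_p}` is within `ε` of `1`. -/
theorem directed_count_null_vectors (d : ℕ) (hd : 3 ≤ d) (ε : ℝ) (hε : 0 < ε) :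
    ∃ c : ℝ, 0 < c ∧ ∃ N : ℕ, ∀ n : ℕ, N ≤ n →
      ∀ (p : ℕ) [Fact p.Prime], Nat.gcd p d = 1 →
      (p : ℝ) ≤ c * (n : ℝ) ^ (min (1/4 : ℝ) (((d : ℝ) - 2) / (2 * (d : ℝ)))) →
      |(1 / ((n * d).factorial : ℝ)) *
          (∑ v ∈ Finset.univ.filter (fun v : Fin n → ZMod p => v ≠ 0),
            ((Finset.univ.filter (fun P : Equiv.Perm (Fin n × Fin d) =>
              Matrix.mulVec ((adjMat n d P).map (Int.cast : ℤ → ZMod p)) v = 0)).card : ℝ))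
        - 1| ≤ ε := by
  obtain ⟨N, hN⟩ := eventually_small d hd ε hε
  refine ⟨1, one_pos, max N 1, ?_⟩
  intro n hn p _ hpd hp
  have hn1 : 1 ≤ n := le_trans (le_max_right _ _) hn
  have hn1' : (1 : ℝ) ≤ n := by exact_mod_cast hn1
  have hp4 : (p : ℝ) ≤ (n : ℝ) ^ (1 / 4 : ℝ) := by
    rw [one_mul] at hp
    exact hp.trans (Real.rpow_le_rpow_of_exponent_le hn1' (min_le_left _ _))
  obtain ⟨h3, hpn, hb⟩ := hN n (le_trans (le_max_left _ _) hn) p (Fact.out : p.Prime).pos hp4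
  have h := total_bound (n := n) (d := d) (p := p) hd h3 hpn hpd
  have e : (1 / ((n * d).factorial : ℝ)) *
          (∑ v ∈ Finset.univ.filter (fun v : Fin n → ZMod p => v ≠ 0),
            ((Finset.univ.filter (fun P : Equiv.Perm (Fin n × Fin d) =>
              Matrix.mulVec ((adjMat n d P).map (Int.cast : ℤ → ZMod p)) v = 0)).card : ℝ))
      = ∑ v ∈ univ.filter (fun v : Fin n → ZMod p => v ≠ 0), nullProb d v := by
    rw [Finset.mul_sum]
    refine Finset.sum_congr rfl fun v _ => ?_
    unfold nullProb
    rw [one_div, inv_mul_eq_div]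
  rw [e]
  exact h.trans hb
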